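/- An element (γ, s, t) with γ = (γ₁ ≥ γ₂ ≥ γ₃ ≥ 0) ∈ ℝ³, s = (s₁ ≥ s₂ ≥ 0) ∈ ℝ², and t ∈ ℝ, t ≥ 0, belongs to T(2,1) if and only if the following inequalities hold: γ₁ ≥ s₁, γ₁ ≥ t, γ₂ ≥ s₂, γ₃ ≤ s₁; γ₁ + γ₂ ≥ s₁ + t, γ₁ + γ₃ ≥ s₂ + t, γ₁ − γ₃ ≥ |s₂ − t|, γ₁ − γ₂ ≥ −s₁ + t; γ₁ + γ₂ + γ₃ ≥ s₁ + s₂ + t, γ₁ + γ₂ − γ₃ ≥ s₁ − s₂ + t, γ₁ + γ₂ − γ₃ ≥ s₁ + s₂ − t, γ₁ − γ₂ + γ₃ ≥ −s₁ + s₂ + t, γ₁ − γ₂ − γ₃ ≥ −s₁ + s₂ − t, and γ₁ − γ₂ − γ₃ ≥ −s₁ − s₂ + t. -/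

import Mathlib

open Matrix

/-- Eigenvalues of a (Hermitian) complex matrix, listed in decreasing order. -/
noncomputable def eigVec {k : ℕ} (X : Matrix (Fin k) (Fin k) ℂ) (hX : X.IsHermitian) :
    Fin k → ℝ :=
  fun i => hX.eigenvalues (Tuple.sort hX.eigenvalues i.rev)

/-- The `i`-th (0-based) singular value of a rectangular complex matrix:
the square root of the `i`-th largest eigenvalue of `Y * Yᴴ` (and `0` for `i ≥ a`). -/
noncomputable def sval {a b : ℕ} (Y : Matrix (Fin a) (Fin b) ℂ) (i : ℕ) : ℝ :=
  if h : i < a then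
    Real.sqrt (eigVec (Y * Yᴴ) (Matrix.isHermitian_mul_conjTranspose_self Y) ⟨i, h⟩)
  else 0

/-- The Horn cone `Horn(k)`. -/
def Horn (k : ℕ) : Set ((Fin k → ℝ) × (Fin k → ℝ) × (Fin k → ℝ)) :=
  { v | ∃ (X Y : Matrix (Fin k) (Fin k) ℂ) (hX : X.IsHermitian) (hY : Y.IsHermitian),
      v.1 = eigVec X hX ∧ v.2.1 = eigVec Y hY ∧ v.2.2 = eigVec (X + Y) (hX.add hY) }

/-- The Littlewood–Richardson cone `LR(m,n)`. -/
def LRcone (m n : ℕ) : Set ((Fin (m + n) → ℝ) × (Fin m → ℝ) × (Fin n → ℝ)) :=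
  { v | ∃ (M : Matrix (Fin (m + n)) (Fin (m + n)) ℂ) (hM : M.IsHermitian),
      v.1 = eigVec M hM ∧
      v.2.1 = eigVec (M.submatrix (Fin.castAdd n) (Fin.castAdd n))
        (hM.submatrix (Fin.castAdd n)) ∧
      v.2.2 = eigVec (M.submatrix (Fin.natAdd m) (Fin.natAdd m))
        (hM.submatrix (Fin.natAdd m)) }

/-- Top-left `p × p` block. -/
def blockTL (p q : ℕ) (X : Matrix (Fin (p + q)) (Fin (p + q)) ℂ) : Matrix (Fin p) (Fin p) ℂ :=
  X.submatrix (Fin.castAdd q) (Fin.castAdd q)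

/-- Top-right `p × q` block. -/
def blockTR (p q : ℕ) (X : Matrix (Fin (p + q)) (Fin (p + q)) ℂ) : Matrix (Fin p) (Fin q) ℂ :=
  X.submatrix (Fin.castAdd q) (Fin.natAdd p)

/-- Bottom-left `q × p` block. -/
def blockBL (p q : ℕ) (X : Matrix (Fin (p + q)) (Fin (p + q)) ℂ) : Matrix (Fin q) (Fin p) ℂ :=
  X.submatrix (Fin.natAdd p) (Fin.castAdd q)

/-- Bottom-right `q × q` block. -/
def blockBR (p q : ℕ) (X : Matrix (Fin (p + q)) (Fin (p + q)) ℂ) : Matrix (Fin q) (Fin q) ℂ :=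
  X.submatrix (Fin.natAdd p) (Fin.natAdd p)

/-- `λ* = (−λ_k, …, −λ_1)`. -/
def starVec {k : ℕ} (x : Fin k → ℝ) : Fin k → ℝ := fun i => -x i.rev

/-- `ŝ^{p,q} = (s₁, …, s_q, 0, …, 0, −s_q, …, −s₁) ∈ ℝ^{p+q}` (with `p − q` middle zeros). -/
noncomputable def hatPQ (p q : ℕ) (s : Fin q → ℝ) : Fin (p + q) → ℝ :=
  fun i =>
    if h : (i : ℕ) < q then s ⟨i, h⟩
    else if h' : (i : ℕ) < p then 0
    else -s ⟨p + q - 1 - i, by have := i.isLt; omega⟩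

/-- The cone `A(p,q)`: pairs `(e(X), s(X₁₂))` for `X` Hermitian of size `p+q`. -/
def coneA (p q : ℕ) : Set ((Fin (p + q) → ℝ) × (Fin q → ℝ)) :=
  { v | ∃ (X : Matrix (Fin (p + q)) (Fin (p + q)) ℂ) (hX : X.IsHermitian),
      v.1 = eigVec X hX ∧ ∀ i : Fin q, v.2 i = sval (blockTR p q X) (i : ℕ) }

/-- The cone `S(p,q)`: triples `(s(X), s(X₁₂), s(X₂₁))`. -/
def coneS (p q : ℕ) : Set ((Fin (p + q) → ℝ) × (Fin q → ℝ) × (Fin q → ℝ)) :=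
  { v | ∃ X : Matrix (Fin (p + q)) (Fin (p + q)) ℂ,
      (∀ i : Fin (p + q), v.1 i = sval X (i : ℕ)) ∧
      (∀ i : Fin q, v.2.1 i = sval (blockTR p q X) (i : ℕ)) ∧
      (∀ i : Fin q, v.2.2 i = sval (blockBL p q X) (i : ℕ)) }

/-- The cone `T(p,q)`: triples `(s(X), s(X₁₁), s(X₂₂))`. -/
def coneT (p q : ℕ) : Set ((Fin (p + q) → ℝ) × (Fin p → ℝ) × (Fin q → ℝ)) :=
  { v | ∃ X : Matrix (Fin (p + q)) (Fin (p + q)) ℂ,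
      (∀ i : Fin (p + q), v.1 i = sval X (i : ℕ)) ∧
      (∀ i : Fin p, v.2.1 i = sval (blockTL p q X) (i : ℕ)) ∧
      (∀ i : Fin q, v.2.2 i = sval (blockBR p q X) (i : ℕ)) }

/-- `μ(A) = (a_r − r ≥ … ≥ a₂ − 2 ≥ a₁ − 1)` as a decreasing real vector, for
`A = {a₁ < … < a_r}` a subset of `[n]` (0-based indexing internally). -/
noncomputable def muVec {n r : ℕ} (A : Finset (Fin n)) (h : A.card = r) : Fin r → ℝ :=
  fun k => (((A.orderIsoOfFin h k.rev : Fin n) : ℕ) : ℝ) - ((k.rev : ℕ) : ℝ)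

/-- `A^o = {ℓ + 1 − a : a ∈ A}` inside `[ℓ]`. -/
def opp {n : ℕ} (A : Finset (Fin n)) : Finset (Fin n) := A.image Fin.rev

/-- `|s|_{K ∩ [q]}` where `K ⊆ [n]`, `s ∈ ℝ^q` and `[q]` is viewed inside `[n]`. -/
noncomputable def sumRestr {n q : ℕ} (s : Fin q → ℝ) (K : Finset (Fin n)) : ℝ :=
  ∑ i ∈ K, (if h : (i : ℕ) < q then s ⟨i, h⟩ else 0)

/-- The augmented matrix `Ŷ^{p,q} = [[0, Y], [Yᴴ, 0]]` of size `p + q`. -/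
def hatM (p q : ℕ) (Y : Matrix (Fin p) (Fin q) ℂ) : Matrix (Fin (p + q)) (Fin (p + q)) ℂ :=
  Matrix.reindex finSumFinEquiv finSumFinEquiv (Matrix.fromBlocks 0 Y Yᴴ 0)

section

open Module
open scoped ComplexOrder InnerProductSpace ComplexConjugate

theorem eigVec_antitone {k : ℕ} (X : Matrix (Fin k) (Fin k) ℂ) (hX : X.IsHermitian) :
    Antitone (eigVec X hX) :=
  (Tuple.monotone_sort hX.eigenvalues).comp_antitone Fin.rev_anti

theorem Antitone.eq_of_multiset_map_eq {k : ℕ} {f g : Fin k → ℝ} (hf : Antitone f)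
    (hg : Antitone g)
    (h : Multiset.map f Finset.univ.val = Multiset.map g Finset.univ.val) : f = g := by
  have hp : (List.ofFn f).Perm (List.ofFn g) := by
    rw [← Multiset.coe_eq_coe]
    simpa [← List.map_ofFn, List.ofFn_eq_map, Fin.univ_val_map] using h
  have := hp.eq_of_sortedGE hf.sortedGE_ofFn hg.sortedGE_ofFn
  exact List.ofFn_injective this

theorem eigVec_multiset {k : ℕ} (X : Matrix (Fin k) (Fin k) ℂ) (hX : X.IsHermitian) :
    Multiset.map (eigVec X hX) Finset.univ.val
      = Multiset.map hX.eigenvalues Finset.univ.val := by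
  have : eigVec X hX = hX.eigenvalues ∘ (Fin.revPerm.trans (Tuple.sort hX.eigenvalues)) := rfl
  rw [this, ← Multiset.map_map]
  congr 1
  exact Multiset.map_univ_val_equiv _

theorem eigVec_eq_of_charpoly {k : ℕ} (X : Matrix (Fin k) (Fin k) ℂ) (hX : X.IsHermitian)
    (l : Fin k → ℝ) (hl : Antitone l)
    (h : X.charpoly = ∏ i, (Polynomial.X - Polynomial.C (l i : ℂ))) : eigVec X hX = l := by
  refine (eigVec_antitone X hX).eq_of_multiset_map_eq hl ?_
  rw [eigVec_multiset]
  have h1 := hX.roots_charpoly_eq_eigenvalues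
  have h2 : (∏ i, (Polynomial.X - Polynomial.C (l i : ℂ))).roots
      = Multiset.map (fun i => (l i : ℂ)) Finset.univ.val := by
    rw [← Polynomial.roots_multiset_prod_X_sub_C (Multiset.map (fun i => (l i : ℂ)) _),
      Multiset.map_map]
    rfl
  rw [h, h2] at h1
  refine Multiset.map_injective Complex.ofReal_injective ?_
  rw [Multiset.map_map, Multiset.map_map]
  exact h1.symm

theorem sval_nonneg {a b : ℕ} (Y : Matrix (Fin a) (Fin b) ℂ) (i : ℕ) : 0 ≤ sval Y i := by
  unfold sval
  split_ifs
  exacts [Real.sqrt_nonneg _, le_rfl]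

theorem sval_sq {a b : ℕ} (Y : Matrix (Fin a) (Fin b) ℂ) (i : Fin a) :
    sval Y i ^ 2 = eigVec (Y * Yᴴ) (Matrix.isHermitian_mul_conjTranspose_self Y) i := by
  rw [sval, dif_pos i.isLt, Real.sq_sqrt]
  exact (Matrix.posSemidef_self_mul_conjTranspose Y).eigenvalues_nonneg _

theorem sval_eq_of_charpoly {a b : ℕ} (Y : Matrix (Fin a) (Fin b) ℂ) (c : Fin a → ℝ)
    (hc : Antitone c) (h0 : ∀ i, 0 ≤ c i)
    (h : (Y * Yᴴ).charpoly = ∏ i : Fin a, (Polynomial.X - Polynomial.C ((c i ^ 2 : ℝ) : ℂ)))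
    (i : Fin a) : c i = sval Y i := by
  have := eigVec_eq_of_charpoly (Y * Yᴴ) (Matrix.isHermitian_mul_conjTranspose_self Y)
    (fun i => c i ^ 2) (fun i j hij => pow_le_pow_left₀ (h0 j) (hc hij) 2) h
  rw [sval, dif_pos i.isLt, this, Real.sqrt_sq (h0 i)]

/-- The sum of the principal `2 × 2` minors. -/
def minorSum (A : Matrix (Fin 3) (Fin 3) ℂ) : ℂ :=
  A 0 0 * A 1 1 - A 0 1 * A 1 0 + (A 0 0 * A 2 2 - A 0 2 * A 2 0)
    + (A 1 1 * A 2 2 - A 1 2 * A 2 1)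

theorem charpoly_fin_three_eq (A : Matrix (Fin 3) (Fin 3) ℂ) :
    A.charpoly = Polynomial.X ^ 3 - Polynomial.C A.trace * Polynomial.X ^ 2
      + Polynomial.C (minorSum A) * Polynomial.X - Polynomial.C A.det := by
  rw [Matrix.charpoly, Matrix.det_fin_three, Matrix.det_fin_three, Matrix.trace_fin_three, minorSum]
  simp
  ring

theorem sval_eq_of_fin_three (Y : Matrix (Fin 3) (Fin 3) ℂ) (c : Fin 3 → ℝ)
    (hc : Antitone c) (h0 : ∀ i, 0 ≤ c i)
    (h1 : (Y * Yᴴ).trace = ((c 0 ^ 2 + c 1 ^ 2 + c 2 ^ 2 : ℝ) : ℂ))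
    (h2 : minorSum (Y * Yᴴ)
      = ((c 0 ^ 2 * c 1 ^ 2 + c 0 ^ 2 * c 2 ^ 2 + c 1 ^ 2 * c 2 ^ 2 : ℝ) : ℂ))
    (h3 : (Y * Yᴴ).det = ((c 0 ^ 2 * c 1 ^ 2 * c 2 ^ 2 : ℝ) : ℂ)) (i : Fin 3) :
    c i = sval Y i := by
  refine sval_eq_of_charpoly Y c hc h0 ?_ i
  rw [charpoly_fin_three_eq, h1, h2, h3, Fin.prod_univ_three]
  simp only [Complex.ofReal_add, Complex.ofReal_mul, map_add, map_mul]
  ring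

theorem sval_eq_of_fin_two (Y : Matrix (Fin 2) (Fin 2) ℂ) (c : Fin 2 → ℝ)
    (hc : Antitone c) (h0 : ∀ i, 0 ≤ c i)
    (h1 : (Y * Yᴴ).trace = ((c 0 ^ 2 + c 1 ^ 2 : ℝ) : ℂ))
    (h2 : (Y * Yᴴ).det = ((c 0 ^ 2 * c 1 ^ 2 : ℝ) : ℂ)) (i : Fin 2) :
    c i = sval Y i := by
  refine sval_eq_of_charpoly Y c hc h0 ?_ i
  rw [Matrix.charpoly_fin_two, h1, h2, Fin.prod_univ_two]
  simp only [Complex.ofReal_add, Complex.ofReal_mul, map_add, map_mul]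
  ring

theorem sval_eq_of_fin_one (Y : Matrix (Fin 1) (Fin 1) ℂ) (c : Fin 1 → ℝ) (h0 : ∀ i, 0 ≤ c i)
    (h1 : (Y * Yᴴ).trace = ((c 0 ^ 2 : ℝ) : ℂ)) (i : Fin 1) : c i = sval Y i := by
  refine sval_eq_of_charpoly Y c (Subsingleton.antitone c) h0 ?_ i
  rw [Matrix.trace_fin_one] at h1
  rw [Matrix.charpoly, Matrix.det_fin_one, Fin.prod_univ_one, Matrix.charmatrix_apply_eq, h1]

theorem exists_orthonormalBasis_svd {n : ℕ} (X : Matrix (Fin n) (Fin n) ℂ) :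
    ∃ p q : OrthonormalBasis (Fin n) ℂ (EuclideanSpace ℂ (Fin n)), ∀ i v,
      ⟪p i, toEuclideanLin X v⟫_ℂ = (sval X i : ℂ) * ⟪q i, v⟫_ℂ := by
  have hA := Matrix.isHermitian_mul_conjTranspose_self X
  set p := hA.eigenvectorBasis.reindex
    ((Fin.revPerm.trans (Tuple.sort hA.eigenvalues)).symm) with hp
  have hT : ∀ v w, ⟪toEuclideanLin Xᴴ v, w⟫_ℂ = ⟪v, toEuclideanLin X w⟫_ℂ := fun v w => by
    rw [toEuclideanLin_conjTranspose_eq_adjoint, LinearMap.adjoint_inner_left]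
  have hpe : ∀ i, toEuclideanLin X (toEuclideanLin Xᴴ (p i)) = ((sval X i : ℂ) ^ 2) • p i := by
    intro i
    have h1 := hA.mulVec_eigenvectorBasis (Tuple.sort hA.eigenvalues i.rev)
    have h2 : p i = hA.eigenvectorBasis (Tuple.sort hA.eigenvalues i.rev) := by
      simp [hp]
    have h3 : ((sval X i : ℂ) ^ 2) = (hA.eigenvalues (Tuple.sort hA.eigenvalues i.rev) : ℂ) := by
      have := sval_sq X i
      rw [← Complex.ofReal_pow, this]
      rfl
    rw [h2, h3]
    ext j
    have := congrFun h1 j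
    rw [← Matrix.mulVec_mulVec] at this
    simpa [toLpLin_apply] using this
  have hin : ∀ i j, ⟪toEuclideanLin Xᴴ (p i), toEuclideanLin Xᴴ (p j)⟫_ℂ
      = if i = j then (sval X j : ℂ) ^ 2 else 0 := by
    intro i j
    rw [hT, hpe, inner_smul_right, orthonormal_iff_ite.1 p.orthonormal]
    simp
  have hv : Orthonormal ℂ ({i : Fin n | sval X i ≠ 0}.domRestrict
      (fun i => ((sval X i : ℂ)⁻¹) • toEuclideanLin Xᴴ (p i))) := by
    rw [orthonormal_iff_ite]
    rintro ⟨i, hi⟩ ⟨j, hj⟩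
    change sval X i ≠ 0 at hi
    change sval X j ≠ 0 at hj
    change ⟪((sval X i : ℂ)⁻¹) • toEuclideanLin Xᴴ (p i),
      ((sval X j : ℂ)⁻¹) • toEuclideanLin Xᴴ (p j)⟫_ℂ = _
    have hj' : (sval X j : ℂ) ≠ 0 := by exact_mod_cast hj
    simp only [inner_smul_left, inner_smul_right, hin, Subtype.mk.injEq]
    split_ifs with h
    · subst h
      simp
      field_simp
    · simp
  obtain ⟨q, hq⟩ := hv.exists_orthonormalBasis_extension_of_card_eq (by simp)
  refine ⟨p, q, fun i v => ?_⟩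
  rw [← hT]
  have : toEuclideanLin Xᴴ (p i) = (sval X i : ℂ) • q i := by
    by_cases h : sval X i = 0
    · rw [h, Complex.ofReal_zero, zero_smul, ← inner_self_eq_zero (𝕜 := ℂ), hin]
      simp [h]
    · rw [hq i h, smul_smul, mul_inv_cancel₀ (by exact_mod_cast h), one_smul]
  rw [this, inner_smul_left]
  simp

section
variable {V : Type*} [NormedAddCommGroup V] [InnerProductSpace ℂ V] [FiniteDimensional ℂ V]

theorem finrank_add_le_finrank_inf_add {P Q R : Submodule ℂ V} (hP : P ≤ R) (hQ : Q ≤ R) :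
    finrank ℂ P + finrank ℂ Q ≤ finrank ℂ (P ⊓ Q : Submodule ℂ V) + finrank ℂ R := by
  have h1 := Submodule.finrank_sup_add_finrank_inf_eq P Q
  have h2 := Submodule.finrank_mono (sup_le hP hQ)
  omega

theorem exists_orthonormal_mem : ∀ {n : ℕ} (S : Fin n → Submodule ℂ V)
    (_ : ∀ i, n ≤ finrank ℂ (S i) + i), ∃ w : Fin n → V, Orthonormal ℂ w ∧ ∀ i, w i ∈ S i := by
  intro n
  induction n with
  | zero => exact fun S _ => ⟨Fin.elim0, ⟨fun i => i.elim0, fun i => i.elim0⟩, fun i => i.elim0⟩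
  | succ n ih =>
    intro S h
    obtain ⟨w, hw, hm⟩ := ih (fun i => S i.succ) fun i => by
      have := h i.succ
      rw [Fin.val_succ] at this
      omega
    set K := Submodule.span ℂ (Set.range w) with hK
    have hKn : finrank ℂ K ≤ n := by
      simpa [Set.finrank] using finrank_range_le_card (R := ℂ) w
    have h1 := finrank_add_le_finrank_inf_add (le_top : S 0 ≤ ⊤) (le_top : Kᗮ ≤ ⊤)
    have h2 := Submodule.finrank_add_finrank_orthogonal K
    have h0 := h 0
    rw [finrank_top] at h1
    rw [Fin.val_zero] at h0
    obtain ⟨v, hv, hv0⟩ := (Submodule.ne_bot_iff _).1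
      (Submodule.one_le_finrank_iff.1 (by omega : 1 ≤ finrank ℂ (S 0 ⊓ Kᗮ : Submodule ℂ V)))
    refine ⟨vecCons ((‖v‖⁻¹ : ℂ) • v) w, orthonormal_vecCons_iff.2 ⟨?_, fun i => ?_, hw⟩, ?_⟩
    · exact norm_smul_inv_norm hv0
    · rw [inner_smul_left, Submodule.inner_left_of_mem_orthogonal (K := K)
        (Submodule.subset_span (Set.mem_range_self i)) hv.2, mul_zero]
    · intro i
      refine Fin.cases ?_ (fun j => ?_) i
      · exact (S 0).smul_mem _ hv.1
      · exact hm j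

theorem sum_inner_eq_of_orthonormal (T : V →ₗ[ℂ] V) (W : Submodule ℂ V) {n : ℕ}
    (hW : finrank ℂ W = n) {w w' : Fin n → V} (hw : Orthonormal ℂ w) (hw' : Orthonormal ℂ w')
    (hm : ∀ i, w i ∈ W) (hm' : ∀ i, w' i ∈ W) :
    ∑ i, ⟪w i, T (w i)⟫_ℂ = ∑ i, ⟪w' i, T (w' i)⟫_ℂ := by
  have key : ∀ {w : Fin n → V}, Orthonormal ℂ w → (∀ i, w i ∈ W) → ∑ i, ⟪w i, T (w i)⟫_ℂ =
      LinearMap.trace ℂ W (W.orthogonalProjectionOnto.toLinearMap ∘ₗ T ∘ₗ W.subtype) := by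
    intro w hw hm
    have hc := hw.codRestrict W hm
    have hsp := hc.linearIndependent.span_eq_top_of_card_eq_finrank' (by simp [hW])
    rw [LinearMap.trace_eq_sum_inner _ (OrthonormalBasis.mk hc hsp.ge)]
    refine Finset.sum_congr rfl fun i _ => ?_
    rw [OrthonormalBasis.coe_mk, LinearMap.comp_apply]
    exact (Submodule.inner_orthogonalProjectionOnto_eq_of_mem_left
      (⟨w i, hm i⟩ : W) (T (w i))).symm
  rw [key hw hm, key hw' hm']

theorem exists_submodule_between {P C : Submodule ℂ V} (hPC : P ≤ C) {n : ℕ}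
    (h1 : finrank ℂ P ≤ n) (h2 : n ≤ finrank ℂ C) :
    ∃ L, P ≤ L ∧ L ≤ C ∧ finrank ℂ L = n := by
  induction n, h1 using Nat.le_induction with
  | base => exact ⟨P, le_rfl, hPC, rfl⟩
  | succ n hn ih =>
    obtain ⟨L, hPL, hLC, hL⟩ := ih (by omega)
    obtain ⟨v, hvC, hvL⟩ : ∃ v ∈ C, v ∉ L := by
      by_contra! h
      have := Submodule.finrank_mono (show C ≤ L from h)
      omega
    refine ⟨L ⊔ Submodule.span ℂ {v}, hPL.trans le_sup_left,
      sup_le hLC ((Submodule.span_singleton_le_iff_mem _ _).2 hvC), ?_⟩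
    have hv0 : v ≠ 0 := fun h => hvL (h ▸ L.zero_mem)
    have h3 := Submodule.finrank_sup_add_finrank_inf_eq L (Submodule.span ℂ {v})
    have h4 : L ⊓ Submodule.span ℂ {v} = ⊥ := by
      rw [← disjoint_iff]
      exact (Submodule.disjoint_span_singleton' hv0).2 hvL
    rw [h4, finrank_bot, finrank_span_singleton hv0] at h3
    omega

/-- Hersch–Zwahlen type inequality for the quadratic form of `T` on `L₁ ⊕ L₂`. -/
theorem quadForm_sum_le (T : V →ₗ[ℂ] V) {L₁ L₂ A₀ A₁ G₀ G₁ : Submodule ℂ V}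
    {m₀ m₁ k l₀ l₁ l₂ : ℝ} (hL : L₁ ⟂ L₂)
    (hd₁ : finrank ℂ L₁ = 2) (hd₂ : finrank ℂ L₂ = 1)
    (hA₀ : 1 ≤ finrank ℂ (L₁ ⊓ A₀ : Submodule ℂ V)) (hA₁ : L₁ ≤ A₁)
    (hG₀ : 1 ≤ finrank ℂ ((L₁ ⊔ L₂) ⊓ G₀ : Submodule ℂ V))
    (hG₁ : 2 ≤ finrank ℂ ((L₁ ⊔ L₂) ⊓ G₁ : Submodule ℂ V))
    (hm₀ : ∀ w ∈ A₀, ‖w‖ = 1 → m₀ ≤ (⟪w, T w⟫_ℂ).re)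
    (hm₁ : ∀ w ∈ A₁, ‖w‖ = 1 → m₁ ≤ (⟪w, T w⟫_ℂ).re)
    (hk : ∀ w ∈ L₂, ‖w‖ = 1 → k ≤ (⟪w, T w⟫_ℂ).re)
    (hl₀ : ∀ w ∈ G₀, ‖w‖ = 1 → (⟪w, T w⟫_ℂ).re ≤ l₀)
    (hl₁ : ∀ w ∈ G₁, ‖w‖ = 1 → (⟪w, T w⟫_ℂ).re ≤ l₁)
    (hl₂ : ∀ w, ‖w‖ = 1 → (⟪w, T w⟫_ℂ).re ≤ l₂) :
    m₀ + m₁ + k ≤ l₀ + l₁ + l₂ := by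
  have hsum : finrank ℂ (L₁ ⊔ L₂ : Submodule ℂ V) = 3 := by
    have := Submodule.finrank_sup_add_finrank_inf_eq L₁ L₂
    rw [disjoint_iff.1 hL.disjoint, finrank_bot] at this
    omega
  obtain ⟨a, ha, ham⟩ := exists_orthonormal_mem ![L₁, L₁ ⊓ A₀] (by
    intro i
    fin_cases i
    exacts [show 2 ≤ finrank ℂ L₁ + 0 by omega,
      show 2 ≤ finrank ℂ (L₁ ⊓ A₀ : Submodule ℂ V) + 1 by omega])
  obtain ⟨b, hb, hbm⟩ := exists_orthonormal_mem ![L₂] (by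
    intro i
    fin_cases i
    exact show 1 ≤ finrank ℂ L₂ + 0 by omega)
  obtain ⟨c, hc, hcm⟩ := exists_orthonormal_mem
    ![L₁ ⊔ L₂, (L₁ ⊔ L₂) ⊓ G₁, (L₁ ⊔ L₂) ⊓ G₀] (by
    intro i
    fin_cases i
    exacts [show 3 ≤ finrank ℂ (L₁ ⊔ L₂ : Submodule ℂ V) + 0 by omega,
      show 3 ≤ finrank ℂ ((L₁ ⊔ L₂) ⊓ G₁ : Submodule ℂ V) + 1 by omega,
      show 3 ≤ finrank ℂ ((L₁ ⊔ L₂) ⊓ G₀ : Submodule ℂ V) + 2 by omega])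
  have ha0 : a 0 ∈ L₁ := ham 0
  have ha1 : a 1 ∈ L₁ ⊓ A₀ := ham 1
  have hb0 : b 0 ∈ L₂ := hbm 0
  have hc0 : c 0 ∈ L₁ ⊔ L₂ := hcm 0
  have hc1 : c 1 ∈ (L₁ ⊔ L₂) ⊓ G₁ := hcm 1
  have hc2 : c 2 ∈ (L₁ ⊔ L₂) ⊓ G₀ := hcm 2
  have hd : Orthonormal ℂ (vecCons (b 0) a) := by
    refine orthonormal_vecCons_iff.2 ⟨hb.1 0, fun i => ?_, ha⟩
    refine hL.symm.inner_eq hb0 ?_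
    fin_cases i
    exacts [ha0, ha1.1]
  have := congrArg Complex.re (sum_inner_eq_of_orthonormal T (L₁ ⊔ L₂) hsum hd hc (by
    intro i
    fin_cases i
    exacts [Submodule.mem_sup_right hb0, Submodule.mem_sup_left ha0,
      Submodule.mem_sup_left ha1.1]) (by
    intro i
    fin_cases i
    exacts [hc0, hc1.1, hc2.1]))
  rw [Fin.sum_univ_three, Fin.sum_univ_three] at this
  simp only [Complex.add_re] at this
  have e0 : vecCons (b 0) a 0 = b 0 := rfl
  have e1 : vecCons (b 0) a 1 = a 0 := rfl
  have e2 : vecCons (b 0) a 2 = a 1 := rfl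
  rw [e0, e1, e2] at this
  have := hk _ hb0 (hb.1 0)
  have := hm₁ _ (hA₁ ha0) (ha.1 0)
  have := hm₀ _ ha1.2 (ha.1 1)
  have := hl₂ _ (hc.1 0)
  have := hl₁ _ hc1.2 (hc.1 1)
  have := hl₀ _ hc2.2 (hc.1 2)
  linarith

theorem quadForm_le (T : V →ₗ[ℂ] V) {A G : Submodule ℂ V} {m l : ℝ}
    (h : finrank ℂ V < finrank ℂ A + finrank ℂ G)
    (hm : ∀ w ∈ A, ‖w‖ = 1 → m ≤ (⟪w, T w⟫_ℂ).re)
    (hl : ∀ w ∈ G, ‖w‖ = 1 → (⟪w, T w⟫_ℂ).re ≤ l) : m ≤ l := by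
  have h1 := finrank_add_le_finrank_inf_add (le_top : A ≤ ⊤) (le_top : G ≤ ⊤)
  rw [finrank_top] at h1
  obtain ⟨a, ha, ham⟩ := exists_orthonormal_mem ![A ⊓ G] (by
    intro i
    fin_cases i
    exact show 1 ≤ finrank ℂ (A ⊓ G : Submodule ℂ V) + 0 by omega)
  exact (hm _ (ham 0).1 (ha.1 0)).trans (hl _ (ham 0).2 (ha.1 0))

end

section
variable {V : Type*} [NormedAddCommGroup V] [InnerProductSpace ℂ V] [FiniteDimensional ℂ V]

theorem one_le_finrank_of_mem {S : Submodule ℂ V} {x : V} (hx : x ∈ S) (h0 : x ≠ 0) :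
    1 ≤ finrank ℂ S :=
  Submodule.one_le_finrank_iff.2 ((Submodule.ne_bot_iff _).2 ⟨x, hx, h0⟩)

theorem exists_mem_ne_zero_of_one_le_finrank {S : Submodule ℂ V} (h : 1 ≤ finrank ℂ S) :
    ∃ x ∈ S, x ≠ 0 :=
  (Submodule.ne_bot_iff _).1 (Submodule.one_le_finrank_iff.1 h)

theorem two_le_finrank_of_mem {S : Submodule ℂ V} {x y : V} (hx : x ∈ S) (hy : y ∈ S)
    (h0 : x ≠ 0) (h : y ∉ Submodule.span ℂ {x}) : 2 ≤ finrank ℂ S := by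
  have h1 : Submodule.span ℂ {x} < S := lt_of_le_of_ne
    ((Submodule.span_singleton_le_iff_mem _ _).2 hx) fun h' => h (h' ▸ hy)
  have := Submodule.finrank_lt_finrank_of_lt h1
  rw [finrank_span_singleton h0] at this
  omega

theorem exists_plane {S C : Submodule ℂ V} (hSC : S ≤ C) (hS : 1 ≤ finrank ℂ S)
    (hC : 2 ≤ finrank ℂ C) {x y : V} (hx : x ∈ S) (hy : y ∈ C) :
    ∃ L ≤ C, finrank ℂ L = 2 ∧ x ∈ L ∧ y ∈ L ∧ 1 ≤ finrank ℂ (L ⊓ S : Submodule ℂ V) := by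
  wlog h0 : x ≠ 0 generalizing x
  · obtain ⟨x', hx', h0'⟩ := exists_mem_ne_zero_of_one_le_finrank hS
    obtain ⟨L, h1, h2, -, h4, h5⟩ := this hx' h0'
    exact ⟨L, h1, h2, by simp [not_not.1 h0], h4, h5⟩
  have hP : Submodule.span ℂ {x, y} ≤ C := by
    rw [Submodule.span_le]
    rintro z (rfl | rfl)
    exacts [hSC hx, hy]
  have hP2 : finrank ℂ (Submodule.span ℂ {x, y}) ≤ 2 := by
    have := finrank_range_le_card (R := ℂ) ![x, y]
    rw [Matrix.range_cons_cons_empty] at this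
    simpa [Set.finrank] using this
  obtain ⟨L, hPL, hLC, hL⟩ := exists_submodule_between hP hP2 hC
  have hxL : x ∈ L := hPL (Submodule.subset_span (by simp))
  exact ⟨L, hLC, hL, hxL, hPL (Submodule.subset_span (by simp)),
    one_le_finrank_of_mem ⟨hxL, hx⟩ h0⟩

theorem exists_plane_of_flags {S C L₂ G₀ G₁ : Submodule ℂ V} (hSC : S ≤ C)
    (hS : 1 ≤ finrank ℂ S) (hC : 2 ≤ finrank ℂ C) (hG : G₀ ≤ G₁)
    (h₀ : 1 ≤ finrank ℂ (G₀ ⊓ (C ⊔ L₂) : Submodule ℂ V))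
    (h₁ : 2 ≤ finrank ℂ (G₁ ⊓ (C ⊔ L₂) : Submodule ℂ V))
    (h₂ : 1 ≤ finrank ℂ (G₁ ⊓ (S ⊔ L₂) : Submodule ℂ V)) :
    ∃ L ≤ C, finrank ℂ L = 2 ∧ 1 ≤ finrank ℂ (L ⊓ S : Submodule ℂ V) ∧
      1 ≤ finrank ℂ ((L ⊔ L₂) ⊓ G₀ : Submodule ℂ V) ∧
      2 ≤ finrank ℂ ((L ⊔ L₂) ⊓ G₁ : Submodule ℂ V) := by
  obtain ⟨w, ⟨hwG, hwK⟩, hw0⟩ := exists_mem_ne_zero_of_one_le_finrank h₀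
  obtain ⟨z', ⟨hzG', hzS'⟩, hz0'⟩ := exists_mem_ne_zero_of_one_le_finrank h₂
  obtain ⟨L, h1, h2, h3, z, hz, hzG, hw, hwz⟩ : ∃ L ≤ C, finrank ℂ L = 2 ∧
      1 ≤ finrank ℂ (L ⊓ S : Submodule ℂ V) ∧ ∃ z ∈ L ⊔ L₂, z ∈ G₁ ∧ w ∈ L ⊔ L₂ ∧
      z ∉ Submodule.span ℂ {w} := by
    by_cases hzw : z' ∈ Submodule.span ℂ {w}
    · obtain ⟨c, rfl⟩ := Submodule.mem_span_singleton.1 hzw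
      have hc : c ≠ 0 := fun h => hz0' (by simp [h])
      replace hzS' := (Submodule.smul_mem_iff _ hc).1 hzS'
      obtain ⟨z, ⟨hzG, hzK⟩, hz⟩ :
          ∃ z ∈ G₁ ⊓ (C ⊔ L₂), z ∉ Submodule.span ℂ {w} := by
        by_contra! h
        have := Submodule.finrank_mono (show G₁ ⊓ (C ⊔ L₂) ≤ Submodule.span ℂ {w} from h)
        rw [finrank_span_singleton hw0] at this
        omega
      obtain ⟨a, ha, b, hb, rfl⟩ := Submodule.mem_sup.1 hzS'
      obtain ⟨a', ha', b', hb', rfl⟩ := Submodule.mem_sup.1 hzK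
      obtain ⟨L, h1, h2, h3, h4, h5⟩ := exists_plane hSC hS hC ha ha'
      exact ⟨L, h1, h2, h5, _, Submodule.add_mem_sup h4 hb', hzG,
        Submodule.add_mem_sup h3 hb, hz⟩
    · obtain ⟨a, ha, b, hb, rfl⟩ := Submodule.mem_sup.1 hzS'
      obtain ⟨a', ha', b', hb', rfl⟩ := Submodule.mem_sup.1 hwK
      obtain ⟨L, h1, h2, h3, h4, h5⟩ := exists_plane hSC hS hC ha ha'
      exact ⟨L, h1, h2, h5, _, Submodule.add_mem_sup h3 hb, hzG',
        Submodule.add_mem_sup h4 hb', hzw⟩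
  exact ⟨L, h1, h2, h3, one_le_finrank_of_mem ⟨hw, hwG⟩ hw0,
    two_le_finrank_of_mem ⟨hw, hG hwG⟩ ⟨hz, hzG⟩ hw0 hwz⟩

/-- Flags of subspaces on which the quadratic form of `T` is bounded above (`F`) or below
(`U` and `E`, with `U` and `E` orthogonal to each other). -/
structure BlockFlags (T : V →ₗ[ℂ] V) (γ₁ γ₂ γ₃ s₁ s₂ t : ℝ)
    (F₁ F₂ F₃ F₄ U₁ U₂ U₃ U₄ E₁ E₂ : Submodule ℂ V) : Prop where
  finrank_eq : finrank ℂ V = 6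
  F₄_le : F₄ ≤ F₃
  F₃_le : F₃ ≤ F₂
  U₁_le : U₁ ≤ U₂
  U₂_le : U₂ ≤ U₃
  U₃_le : U₃ ≤ U₄
  E₁_le : E₁ ≤ E₂
  ortho : U₄ ⟂ E₂
  finrank_F₁ : 5 ≤ finrank ℂ F₁
  finrank_F₂ : 4 ≤ finrank ℂ F₂
  finrank_F₃ : 3 ≤ finrank ℂ F₃
  finrank_F₄ : 2 ≤ finrank ℂ F₄
  finrank_U₁ : 1 ≤ finrank ℂ U₁
  finrank_U₂ : 2 ≤ finrank ℂ U₂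
  finrank_U₃ : 3 ≤ finrank ℂ U₃
  finrank_U₄ : 4 ≤ finrank ℂ U₄
  finrank_E₁ : 1 ≤ finrank ℂ E₁
  finrank_E₂ : 2 ≤ finrank ℂ E₂
  le_top : ∀ w, ‖w‖ = 1 → (⟪w, T w⟫_ℂ).re ≤ γ₁
  le_F₁ : ∀ w ∈ F₁, ‖w‖ = 1 → (⟪w, T w⟫_ℂ).re ≤ γ₂
  le_F₂ : ∀ w ∈ F₂, ‖w‖ = 1 → (⟪w, T w⟫_ℂ).re ≤ γ₃
  le_F₃ : ∀ w ∈ F₃, ‖w‖ = 1 → (⟪w, T w⟫_ℂ).re ≤ -γ₃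
  le_F₄ : ∀ w ∈ F₄, ‖w‖ = 1 → (⟪w, T w⟫_ℂ).re ≤ -γ₂
  U₁_bound : ∀ w ∈ U₁, ‖w‖ = 1 → s₁ ≤ (⟪w, T w⟫_ℂ).re
  U₂_bound : ∀ w ∈ U₂, ‖w‖ = 1 → s₂ ≤ (⟪w, T w⟫_ℂ).re
  U₃_bound : ∀ w ∈ U₃, ‖w‖ = 1 → -s₂ ≤ (⟪w, T w⟫_ℂ).re
  U₄_bound : ∀ w ∈ U₄, ‖w‖ = 1 → -s₁ ≤ (⟪w, T w⟫_ℂ).re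
  E₁_bound : ∀ w ∈ E₁, ‖w‖ = 1 → t ≤ (⟪w, T w⟫_ℂ).re
  E₂_bound : ∀ w ∈ E₂, ‖w‖ = 1 → -t ≤ (⟪w, T w⟫_ℂ).re

theorem finrank_sup_of_isOrtho {P Q : Submodule ℂ V} (h : P ⟂ Q) :
    finrank ℂ (P ⊔ Q : Submodule ℂ V) = finrank ℂ P + finrank ℂ Q := by
  have := Submodule.finrank_sup_add_finrank_inf_eq P Q
  rw [disjoint_iff.1 h.disjoint, finrank_bot] at this
  omega

theorem le_finrank_inf {P Q : Submodule ℂ V} {n : ℕ}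
    (h : finrank ℂ V + n ≤ finrank ℂ P + finrank ℂ Q) :
    n ≤ finrank ℂ (P ⊓ Q : Submodule ℂ V) := by
  have h1 := finrank_add_le_finrank_inf_add (_root_.le_top : P ≤ ⊤) (_root_.le_top : Q ≤ ⊤)
  rw [finrank_top] at h1
  omega

theorem exists_line_le {E : Submodule ℂ V} (hE : 1 ≤ finrank ℂ E) {x : V} (hx : x ∈ E) :
    ∃ L ≤ E, finrank ℂ L = 1 ∧ x ∈ L := by
  obtain ⟨L, h1, h2, h3⟩ := exists_submodule_between
    ((Submodule.span_singleton_le_iff_mem x _).2 hx)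
    (by simpa using finrank_span_le_card (R := ℂ) {x}) hE
  exact ⟨L, h2, h3, h1 (Submodule.mem_span_singleton_self x)⟩

namespace BlockFlags

variable {T : V →ₗ[ℂ] V} {γ₁ γ₂ γ₃ s₁ s₂ t : ℝ}
  {F₁ F₂ F₃ F₄ U₁ U₂ U₃ U₄ E₁ E₂ : Submodule ℂ V}

theorem s₁_le (H : BlockFlags T γ₁ γ₂ γ₃ s₁ s₂ t F₁ F₂ F₃ F₄ U₁ U₂ U₃ U₄ E₁ E₂) :
    s₁ ≤ γ₁ :=
  quadForm_le T (A := U₁) (G := ⊤) (by rw [finrank_top]; have := H.finrank_U₁; omega)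
    H.U₁_bound fun w _ => H.le_top w

theorem s₂_le (H : BlockFlags T γ₁ γ₂ γ₃ s₁ s₂ t F₁ F₂ F₃ F₄ U₁ U₂ U₃ U₄ E₁ E₂) :
    s₂ ≤ γ₂ :=
  quadForm_le T (A := U₂) (G := F₁)
    (by have := H.finrank_U₂; have := H.finrank_F₁; have := H.finrank_eq; omega)
    H.U₂_bound H.le_F₁

theorem γ₃_le (H : BlockFlags T γ₁ γ₂ γ₃ s₁ s₂ t F₁ F₂ F₃ F₄ U₁ U₂ U₃ U₄ E₁ E₂) :
    γ₃ ≤ s₁ := by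
  have := quadForm_le T (A := U₄) (G := F₃)
    (by have := H.finrank_U₄; have := H.finrank_F₃; have := H.finrank_eq; omega)
    H.U₄_bound H.le_F₃
  linarith

theorem ineq_ppp (H : BlockFlags T γ₁ γ₂ γ₃ s₁ s₂ t F₁ F₂ F₃ F₄ U₁ U₂ U₃ U₄ E₁ E₂) :
    s₁ + s₂ + t ≤ γ₁ + γ₂ + γ₃ := by
  obtain ⟨L₂, hL₂, hd₂, -⟩ := exists_line_le H.finrank_E₁ (Submodule.zero_mem _)
  obtain ⟨L₁, hL₁, hd₁, -, -, hi⟩ := exists_plane H.U₁_le H.finrank_U₁ H.finrank_U₂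
    (Submodule.zero_mem _) (Submodule.zero_mem _)
  have hL : L₁ ⟂ L₂ := H.ortho.mono (hL₁.trans (H.U₂_le.trans H.U₃_le)) (hL₂.trans H.E₁_le)
  have h3 := finrank_sup_of_isOrtho hL
  have := quadForm_sum_le T hL hd₁ hd₂ hi hL₁
    (le_finrank_inf (by have := H.finrank_F₂; have := H.finrank_eq; omega))
    (le_finrank_inf (by have := H.finrank_F₁; have := H.finrank_eq; omega))
    H.U₁_bound H.U₂_bound (fun w hw => H.E₁_bound w (hL₂ hw)) H.le_F₂ H.le_F₁ H.le_top
  linarith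

theorem ineq_ppm (H : BlockFlags T γ₁ γ₂ γ₃ s₁ s₂ t F₁ F₂ F₃ F₄ U₁ U₂ U₃ U₄ E₁ E₂) :
    s₁ + s₂ - t ≤ γ₁ + γ₂ - γ₃ := by
  obtain ⟨L₁, hL₁, hd₁, -, -, hi⟩ := exists_plane H.U₁_le H.finrank_U₁ H.finrank_U₂
    (Submodule.zero_mem _) (Submodule.zero_mem _)
  have hU := hL₁.trans (H.U₂_le.trans H.U₃_le)
  have h4 := finrank_sup_of_isOrtho (H.ortho.mono hU le_rfl)
  obtain ⟨w, ⟨hwF, hwK⟩, hw0⟩ := exists_mem_ne_zero_of_one_le_finrank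
    (le_finrank_inf (P := F₃) (Q := L₁ ⊔ E₂) (n := 1) (by
      have := H.finrank_F₃; have := H.finrank_E₂; have := H.finrank_eq; omega))
  obtain ⟨a, ha, b, hb, rfl⟩ := Submodule.mem_sup.1 hwK
  obtain ⟨L₂, hL₂, hd₂, hbL⟩ := exists_line_le (by have := H.finrank_E₂; omega) hb
  have hL : L₁ ⟂ L₂ := H.ortho.mono hU hL₂
  have h3 := finrank_sup_of_isOrtho hL
  have := quadForm_sum_le T hL hd₁ hd₂ hi hL₁
    (one_le_finrank_of_mem ⟨Submodule.add_mem_sup ha hbL, hwF⟩ hw0)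
    (le_finrank_inf (by have := H.finrank_F₁; have := H.finrank_eq; omega))
    H.U₁_bound H.U₂_bound (fun w hw => H.E₂_bound w (hL₂ hw)) H.le_F₃ H.le_F₁ H.le_top
  linarith

theorem ineq_pmp (H : BlockFlags T γ₁ γ₂ γ₃ s₁ s₂ t F₁ F₂ F₃ F₄ U₁ U₂ U₃ U₄ E₁ E₂) :
    s₁ - s₂ + t ≤ γ₁ + γ₂ - γ₃ := by
  obtain ⟨L₂, hL₂, hd₂, -⟩ := exists_line_le H.finrank_E₁ (Submodule.zero_mem _)
  have hE := hL₂.trans H.E₁_le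
  have h4 := finrank_sup_of_isOrtho (H.ortho.mono H.U₃_le hE)
  obtain ⟨w, ⟨hwF, hwK⟩, hw0⟩ := exists_mem_ne_zero_of_one_le_finrank
    (le_finrank_inf (P := F₃) (Q := U₃ ⊔ L₂) (n := 1) (by
      have := H.finrank_F₃; have := H.finrank_U₃; have := H.finrank_eq; omega))
  obtain ⟨a, ha, b, hb, rfl⟩ := Submodule.mem_sup.1 hwK
  obtain ⟨L₁, hL₁, hd₁, -, haL, hi⟩ := exists_plane (H.U₁_le.trans H.U₂_le) H.finrank_U₁
    (by have := H.finrank_U₃; omega) (Submodule.zero_mem _) ha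
  have hL : L₁ ⟂ L₂ := H.ortho.mono (hL₁.trans H.U₃_le) hE
  have h3 := finrank_sup_of_isOrtho hL
  have := quadForm_sum_le T hL hd₁ hd₂ hi hL₁
    (one_le_finrank_of_mem ⟨Submodule.add_mem_sup haL hb, hwF⟩ hw0)
    (le_finrank_inf (by have := H.finrank_F₁; have := H.finrank_eq; omega))
    H.U₁_bound H.U₃_bound (fun w hw => H.E₁_bound w (hL₂ hw)) H.le_F₃ H.le_F₁ H.le_top
  linarith

theorem ineq_mpp (H : BlockFlags T γ₁ γ₂ γ₃ s₁ s₂ t F₁ F₂ F₃ F₄ U₁ U₂ U₃ U₄ E₁ E₂) :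
    -s₁ + s₂ + t ≤ γ₁ - γ₂ + γ₃ := by
  obtain ⟨L₂, hL₂, hd₂, -⟩ := exists_line_le H.finrank_E₁ (Submodule.zero_mem _)
  have hE := hL₂.trans H.E₁_le
  have hU := H.U₂_le.trans H.U₃_le
  have h5 := finrank_sup_of_isOrtho (H.ortho.mono le_rfl hE)
  have h4 := finrank_sup_of_isOrtho (H.ortho.mono hU hE)
  have := H.finrank_eq
  have := H.finrank_U₄
  have := H.finrank_U₂
  have := H.finrank_F₂
  have := H.finrank_F₄
  obtain ⟨L₁, hL₁, hd₁, hi, hG₀, hG₁⟩ := exists_plane_of_flags (L₂ := L₂) hU (by omega)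
    (by omega) (H.F₄_le.trans H.F₃_le) (le_finrank_inf (by omega)) (le_finrank_inf (by omega))
    (le_finrank_inf (by omega))
  have := quadForm_sum_le T (H.ortho.mono hL₁ hE) hd₁ hd₂ hi hL₁ hG₀ hG₁
    H.U₂_bound H.U₄_bound (fun w hw => H.E₁_bound w (hL₂ hw)) H.le_F₄ H.le_F₂ H.le_top
  linarith

theorem ineq_mmp (H : BlockFlags T γ₁ γ₂ γ₃ s₁ s₂ t F₁ F₂ F₃ F₄ U₁ U₂ U₃ U₄ E₁ E₂) :
    -s₁ - s₂ + t ≤ γ₁ - γ₂ - γ₃ := by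
  obtain ⟨L₂, hL₂, hd₂, -⟩ := exists_line_le H.finrank_E₁ (Submodule.zero_mem _)
  have hE := hL₂.trans H.E₁_le
  have h5 := finrank_sup_of_isOrtho (H.ortho.mono le_rfl hE)
  have h4 := finrank_sup_of_isOrtho (H.ortho.mono H.U₃_le hE)
  have := H.finrank_eq
  have := H.finrank_U₄
  have := H.finrank_U₃
  have := H.finrank_F₃
  have := H.finrank_F₄
  obtain ⟨L₁, hL₁, hd₁, hi, hG₀, hG₁⟩ := exists_plane_of_flags (L₂ := L₂) H.U₃_le (by omega)
    (by omega) H.F₄_le (le_finrank_inf (by omega)) (le_finrank_inf (by omega))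
    (le_finrank_inf (by omega))
  have := quadForm_sum_le T (H.ortho.mono hL₁ hE) hd₁ hd₂ hi hL₁ hG₀ hG₁
    H.U₃_bound H.U₄_bound (fun w hw => H.E₁_bound w (hL₂ hw)) H.le_F₄ H.le_F₃ H.le_top
  linarith

theorem ineq_mpm (H : BlockFlags T γ₁ γ₂ γ₃ s₁ s₂ t F₁ F₂ F₃ F₄ U₁ U₂ U₃ U₄ E₁ E₂) :
    -s₁ + s₂ - t ≤ γ₁ - γ₂ - γ₃ := by
  have hU := H.U₂_le.trans H.U₃_le
  have := H.finrank_eq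
  have := H.finrank_U₄
  have := H.finrank_U₂
  have := H.finrank_F₃
  have := H.finrank_F₄
  have := H.finrank_E₂
  have h4 := finrank_sup_of_isOrtho (H.ortho.mono hU le_rfl)
  obtain ⟨w, ⟨hwF, hwK⟩, hw0⟩ := exists_mem_ne_zero_of_one_le_finrank
    (le_finrank_inf (P := F₃) (Q := U₂ ⊔ E₂) (n := 1) (by omega))
  obtain ⟨a, ha, b, hb, rfl⟩ := Submodule.mem_sup.1 hwK
  obtain ⟨L₂, hL₂, hd₂, hbL⟩ := exists_line_le (by omega) hb
  have h5 := finrank_sup_of_isOrtho (H.ortho.mono le_rfl hL₂)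
  obtain ⟨L₁, hL₁, hd₁, hi, hG₀, hG₁⟩ := exists_plane_of_flags (L₂ := L₂) hU (by omega)
    (by omega) H.F₄_le (le_finrank_inf (by omega)) (le_finrank_inf (by omega))
    (one_le_finrank_of_mem ⟨hwF, Submodule.add_mem_sup ha hbL⟩ hw0)
  have := quadForm_sum_le T (H.ortho.mono hL₁ hL₂) hd₁ hd₂ hi hL₁ hG₀ hG₁
    H.U₂_bound H.U₄_bound (fun w hw => H.E₂_bound w (hL₂ hw)) H.le_F₄ H.le_F₃ H.le_top
  linarith

end BlockFlags
end

theorem sval_anti {a b : ℕ} (Y : Matrix (Fin a) (Fin b) ℂ) {i j : ℕ} (h : i ≤ j) :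
    sval Y j ≤ sval Y i := by
  by_cases hj : j < a
  · rw [sval, sval, dif_pos hj, dif_pos (h.trans_lt hj)]
    exact Real.sqrt_le_sqrt (eigVec_antitone _ _ h)
  · rw [sval, dif_neg hj]
    exact sval_nonneg Y i

theorem finrank_ker_pi_add {V : Type*} [AddCommGroup V] [Module ℂ V] [FiniteDimensional ℂ V]
    {k : ℕ} (f : Fin k → V →ₗ[ℂ] ℂ) :
    finrank ℂ V ≤ finrank ℂ (LinearMap.ker (LinearMap.pi f)) + k := by
  have h1 := LinearMap.finrank_range_add_finrank_ker (LinearMap.pi f)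
  have h2 := Submodule.finrank_le (LinearMap.range (LinearMap.pi f))
  rw [finrank_fin_fun] at h2
  omega

theorem two_mul_re_conj_mul_le (a b : ℂ) :
    2 * (conj a * b).re ≤ ‖a‖ ^ 2 + ‖b‖ ^ 2 := by
  rw [Complex.sq_norm, Complex.sq_norm, Complex.normSq_apply, Complex.normSq_apply]
  simp
  nlinarith [sq_nonneg (a.re - b.re), sq_nonneg (a.im - b.im)]

theorem le_two_mul_re_conj_mul (a b : ℂ) :
    -(‖a‖ ^ 2 + ‖b‖ ^ 2) ≤ 2 * (conj a * b).re := by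
  have := two_mul_re_conj_mul_le a (-b)
  simp at this ⊢
  linarith

theorem two_mul_re_conj_mul_self (a : ℂ) :
    2 * (conj a * a).re = ‖a‖ ^ 2 + ‖a‖ ^ 2 := by
  rw [Complex.sq_norm, Complex.normSq_apply]
  simp
  ring

theorem two_mul_re_conj_mul_of_add_eq_zero {a b : ℂ} (h : a + b = 0) :
    2 * (conj a * b).re = -(‖a‖ ^ 2 + ‖b‖ ^ 2) := by
  have := two_mul_re_conj_mul_self a
  obtain rfl : b = -a := by linear_combination h
  simp at this ⊢
  linarith

/-- The singular values of `X` in Rayleigh form. -/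
theorem two_mul_re_inner_eq_sum {n : ℕ} {X : Matrix (Fin n) (Fin n) ℂ}
    {p q : OrthonormalBasis (Fin n) ℂ (EuclideanSpace ℂ (Fin n))}
    (h : ∀ i v, ⟪p i, toEuclideanLin X v⟫_ℂ = (sval X i : ℂ) * ⟪q i, v⟫_ℂ)
    (u v : EuclideanSpace ℂ (Fin n)) :
    2 * (⟪u, toEuclideanLin X v⟫_ℂ).re
      = ∑ i : Fin n, sval X i * (2 * (conj ⟪p i, u⟫_ℂ * ⟪q i, v⟫_ℂ).re) := by
  rw [← p.sum_inner_mul_inner, Complex.re_sum, Finset.mul_sum]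
  refine Finset.sum_congr rfl fun i _ => ?_
  rw [h, inner_conj_symm, ← mul_assoc, mul_comm _ (sval X i : ℂ), mul_assoc, Complex.re_ofReal_mul]
  ring

abbrev PairSpace := WithLp 2 (EuclideanSpace ℂ (Fin (2 + 1)) × EuclideanSpace ℂ (Fin (2 + 1)))

noncomputable def pairFst : PairSpace →ₗ[ℂ] EuclideanSpace ℂ (Fin (2 + 1)) :=
  LinearMap.fst ℂ _ _ ∘ₗ (WithLp.linearEquiv 2 ℂ _).toLinearMap

noncomputable def pairSnd : PairSpace →ₗ[ℂ] EuclideanSpace ℂ (Fin (2 + 1)) :=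
  LinearMap.snd ℂ _ _ ∘ₗ (WithLp.linearEquiv 2 ℂ _).toLinearMap

/-- An operator whose quadratic form is `(u, v) ↦ 2 ⟪u, X v⟫`. -/
noncomputable def pairOp (X : Matrix (Fin (2 + 1)) (Fin (2 + 1)) ℂ) : PairSpace →ₗ[ℂ] PairSpace :=
  (WithLp.linearEquiv 2 ℂ _).symm.toLinearMap ∘ₗ LinearMap.inl ℂ _ _ ∘ₗ
    ((2 : ℂ) • toEuclideanLin X) ∘ₗ pairSnd

theorem inner_pair (w w' : PairSpace) :
    ⟪w, w'⟫_ℂ = ⟪pairFst w, pairFst w'⟫_ℂ + ⟪pairSnd w, pairSnd w'⟫_ℂ := by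
  rw [WithLp.prod_inner_apply]
  rfl

theorem norm_sq_pair (w : PairSpace) : ‖w‖ ^ 2 = ‖pairFst w‖ ^ 2 + ‖pairSnd w‖ ^ 2 :=
  WithLp.prod_norm_sq_eq_of_L2 w

theorem re_inner_pairOp (X : Matrix (Fin (2 + 1)) (Fin (2 + 1)) ℂ) (w : PairSpace) :
    (⟪w, pairOp X w⟫_ℂ).re = 2 * (⟪pairFst w, toEuclideanLin X (pairSnd w)⟫_ℂ).re := by
  have h1 : pairFst (pairOp X w) = (2 : ℂ) • toEuclideanLin X (pairSnd w) := rfl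
  have h2 : pairSnd (pairOp X w) = 0 := rfl
  rw [inner_pair, h1, h2, inner_smul_right]
  simp

theorem finrank_pairSpace : finrank ℂ PairSpace = 6 := by
  rw [(WithLp.linearEquiv 2 ℂ _).finrank_eq, finrank_prod]
  simp

/-- Restriction of coordinates along `f`. -/
noncomputable def coordRestrict {m n : ℕ} (f : Fin m → Fin n) :
    EuclideanSpace ℂ (Fin n) →ₗ[ℂ] EuclideanSpace ℂ (Fin m) :=
  (WithLp.linearEquiv 2 ℂ _).symm.toLinearMap ∘ₗ LinearMap.funLeft ℂ ℂ f ∘ₗ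
    (WithLp.linearEquiv 2 ℂ _).toLinearMap

theorem inner_coordRestrict {m n : ℕ} {f : Fin m → Fin n} (hf : Function.Injective f)
    {u v : EuclideanSpace ℂ (Fin n)} (hu : ∀ i ∉ Set.range f, u i = 0) :
    ⟪coordRestrict f u, coordRestrict f v⟫_ℂ = ⟪u, v⟫_ℂ := by
  rw [PiLp.inner_apply, PiLp.inner_apply]
  exact Fintype.sum_of_injective f hf _ _ (fun i hi => by simp [hu i hi]) fun i => rfl

theorem norm_coordRestrict {m n : ℕ} {f : Fin m → Fin n} (hf : Function.Injective f)
    {u : EuclideanSpace ℂ (Fin n)} (hu : ∀ i ∉ Set.range f, u i = 0) :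
    ‖coordRestrict f u‖ = ‖u‖ := by
  rw [norm_eq_sqrt_re_inner (𝕜 := ℂ), norm_eq_sqrt_re_inner (𝕜 := ℂ), inner_coordRestrict hf hu]

theorem toEuclideanLin_submatrix_coordRestrict {m n : ℕ} {f : Fin m → Fin n}
    (hf : Function.Injective f) (X : Matrix (Fin n) (Fin n) ℂ)
    {v : EuclideanSpace ℂ (Fin n)} (hv : ∀ i ∉ Set.range f, v i = 0) :
    toEuclideanLin (X.submatrix f f) (coordRestrict f v)
      = coordRestrict f (toEuclideanLin X v) := by
  ext i
  exact Fintype.sum_of_injective f hf _ (fun j => X (f i) j * v j)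
    (fun j hj => by simp [hv j hj]) fun j => rfl

/-- On vectors supported on the range of `f`, the quadratic form of `pairOp X` and the norm are
diagonal in the singular coordinates of the block `X.submatrix f f`. -/
theorem exists_singular_coords (X : Matrix (Fin (2 + 1)) (Fin (2 + 1)) ℂ) {m : ℕ}
    {f : Fin m → Fin (2 + 1)} (hf : Function.Injective f) :
    ∃ α β : Fin m → PairSpace →ₗ[ℂ] ℂ, ∀ w,
      (∀ i ∉ Set.range f, pairFst w i = 0 ∧ pairSnd w i = 0) →
      (⟪w, pairOp X w⟫_ℂ).re
        = ∑ i : Fin m, sval (X.submatrix f f) i * (2 * (conj (α i w) * β i w).re) ∧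
      ‖w‖ ^ 2 = ∑ i, (‖α i w‖ ^ 2 + ‖β i w‖ ^ 2) := by
  obtain ⟨p, q, h⟩ := exists_orthonormalBasis_svd (X.submatrix f f)
  refine ⟨fun i => (innerₛₗ ℂ (p i)) ∘ₗ coordRestrict f ∘ₗ pairFst,
    fun i => (innerₛₗ ℂ (q i)) ∘ₗ coordRestrict f ∘ₗ pairSnd, fun w hw => ⟨?_, ?_⟩⟩
  · rw [re_inner_pairOp, ← inner_coordRestrict hf fun i hi => (hw i hi).1,
      ← toEuclideanLin_submatrix_coordRestrict hf X fun i hi => (hw i hi).2,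
      two_mul_re_inner_eq_sum h]
    rfl
  · rw [norm_sq_pair, ← norm_coordRestrict hf fun i hi => (hw i hi).1,
      ← norm_coordRestrict hf fun i hi => (hw i hi).2, Finset.sum_add_distrib,
      ← p.sum_sq_norm_inner_right, ← q.sum_sq_norm_inner_right]
    rfl

theorem mem_ker_pi_iff {V : Type*} [AddCommGroup V] [Module ℂ V] {k : ℕ}
    {f : Fin k → V →ₗ[ℂ] ℂ} {w : V} :
    w ∈ LinearMap.ker (LinearMap.pi f) ↔ ∀ i, f i w = 0 := by
  rw [LinearMap.mem_ker]
  exact funext_iff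

theorem le_finrank_ker_pi {k n : ℕ} (f : Fin k → PairSpace →ₗ[ℂ] ℂ) (h : n + k = 6) :
    n ≤ finrank ℂ (LinearMap.ker (LinearMap.pi f)) := by
  have := finrank_ker_pi_add f
  rw [finrank_pairSpace] at this
  omega

/-- The `i`-th coordinate of the first component. -/
noncomputable def pairFstCoord (i : Fin (2 + 1)) : PairSpace →ₗ[ℂ] ℂ :=
  LinearMap.proj i ∘ₗ (WithLp.linearEquiv 2 ℂ (Fin (2 + 1) → ℂ)).toLinearMap ∘ₗ pairFst

/-- The `i`-th coordinate of the second component. -/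
noncomputable def pairSndCoord (i : Fin (2 + 1)) : PairSpace →ₗ[ℂ] ℂ :=
  LinearMap.proj i ∘ₗ (WithLp.linearEquiv 2 ℂ (Fin (2 + 1) → ℂ)).toLinearMap ∘ₗ pairSnd

theorem two_mul_re_conj_mul_bounds (a b : ℂ) : ∃ c n : ℝ, 2 * (conj a * b).re = c ∧
    ‖a‖ ^ 2 + ‖b‖ ^ 2 = n ∧ -n ≤ c ∧ c ≤ n ∧ (a + b = 0 → c = -n) ∧ (a - b = 0 → c = n) ∧
    (a = 0 → c = 0) := by
  refine ⟨_, _, rfl, rfl, le_two_mul_re_conj_mul a b, two_mul_re_conj_mul_le a b,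
    two_mul_re_conj_mul_of_add_eq_zero, fun h => ?_, fun h => by simp [h]⟩
  rw [← sub_eq_zero.1 h]
  exact two_mul_re_conj_mul_self a

theorem exists_blockFlags (X : Matrix (Fin (2 + 1)) (Fin (2 + 1)) ℂ) :
    ∃ F₁ F₂ F₃ F₄ U₁ U₂ U₃ U₄ E₁ E₂ : Submodule ℂ PairSpace,
      BlockFlags (pairOp X) (sval X 0) (sval X 1) (sval X 2) (sval (blockTL 2 1 X) 0)
        (sval (blockTL 2 1 X) 1) (sval (blockBR 2 1 X) 0) F₁ F₂ F₃ F₄ U₁ U₂ U₃ U₄ E₁ E₂ := by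
  obtain ⟨α, β, h⟩ : ∃ α β : Fin 3 → PairSpace →ₗ[ℂ] ℂ, ∀ w, ‖w‖ = 1 → ∃ c n : Fin 3 → ℝ,
      (⟪w, pairOp X w⟫_ℂ).re = sval X 0 * c 0 + sval X 1 * c 1 + sval X 2 * c 2 ∧
      n 0 + n 1 + n 2 = 1 ∧ ∀ i, -n i ≤ c i ∧ c i ≤ n i ∧ (α i w + β i w = 0 → c i = -n i) ∧
        (α i w - β i w = 0 → c i = n i) ∧ (α i w = 0 → c i = 0) := by
    obtain ⟨α, β, h⟩ := exists_singular_coords X (f := id) Function.injective_id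
    refine ⟨α, β, fun w hw => ?_⟩
    choose c n hc hn hb using fun i => two_mul_re_conj_mul_bounds (α i w) (β i w)
    obtain ⟨h1, h2⟩ := h w (by simp)
    simp only [hc, hn, hw, one_pow] at h1 h2
    exact ⟨c, n, h1.trans (Fin.sum_univ_three _), ((h2.trans (Fin.sum_univ_three _))).symm, hb⟩
  obtain ⟨α', β', h'⟩ : ∃ α β : Fin 2 → PairSpace →ₗ[ℂ] ℂ, ∀ w,
      pairFstCoord 2 w = 0 → pairSndCoord 2 w = 0 → ‖w‖ = 1 → ∃ c n : Fin 2 → ℝ,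
      (⟪w, pairOp X w⟫_ℂ).re
        = sval (blockTL 2 1 X) 0 * c 0 + sval (blockTL 2 1 X) 1 * c 1 ∧
      n 0 + n 1 = 1 ∧ ∀ i, -n i ≤ c i ∧ c i ≤ n i ∧ (α i w + β i w = 0 → c i = -n i) ∧
        (α i w - β i w = 0 → c i = n i) ∧ (α i w = 0 → c i = 0) := by
    obtain ⟨α, β, h⟩ := exists_singular_coords X (f := Fin.castAdd 1)
      (Fin.castAdd_injective 2 1)
    refine ⟨α, β, fun w hu hv hw => ?_⟩
    choose c n hc hn hb using fun i => two_mul_re_conj_mul_bounds (α i w) (β i w)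
    obtain ⟨h1, h2⟩ := h w (by
      intro i hi
      fin_cases i
      exacts [(hi ⟨0, rfl⟩).elim, (hi ⟨1, rfl⟩).elim, ⟨hu, hv⟩])
    simp only [hc, hn, hw, one_pow] at h1 h2
    exact ⟨c, n, h1.trans (Fin.sum_univ_two _), ((h2.trans (Fin.sum_univ_two _))).symm, hb⟩
  obtain ⟨α'', β'', h''⟩ : ∃ α β : PairSpace →ₗ[ℂ] ℂ, ∀ w,
      pairFstCoord 0 w = 0 → pairFstCoord 1 w = 0 → pairSndCoord 0 w = 0 →
      pairSndCoord 1 w = 0 → ‖w‖ = 1 → ∃ c : ℝ,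
      (⟪w, pairOp X w⟫_ℂ).re = sval (blockBR 2 1 X) 0 * c ∧
      -1 ≤ c ∧ (α w - β w = 0 → c = 1) := by
    obtain ⟨α, β, h⟩ := exists_singular_coords X (f := Fin.natAdd 2)
      (Fin.natAdd_injective 1 2)
    refine ⟨α 0, β 0, fun w hu hu' hv hv' hw => ?_⟩
    choose c n hc hn hb using fun i => two_mul_re_conj_mul_bounds (α i w) (β i w)
    obtain ⟨h1, h2⟩ := h w (by
      intro i hi
      fin_cases i
      exacts [⟨hu, hv⟩, ⟨hu', hv'⟩, (hi ⟨0, rfl⟩).elim])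
    simp only [hc, hn, hw, one_pow] at h1 h2
    have h3 := h2.trans (Fin.sum_univ_one _)
    rw [h3]
    exact ⟨c 0, h1.trans (Fin.sum_univ_one _), (hb 0).1, (hb 0).2.2.2.1⟩
  have g0 := sval_nonneg X 2
  have g1 := sval_anti X (show 0 ≤ 1 by omega)
  have g2 := sval_anti X (show 1 ≤ 2 by omega)
  have s0 := sval_nonneg (blockTL 2 1 X) 1
  have s1 := sval_anti (blockTL 2 1 X) (show 0 ≤ 1 by omega)
  have t0 := sval_nonneg (blockBR 2 1 X) 0
  refine ⟨LinearMap.ker (LinearMap.pi ![α 0 + β 0]),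
    LinearMap.ker (LinearMap.pi ![α 0 + β 0, α 1 + β 1]),
    LinearMap.ker (LinearMap.pi ![α 0 + β 0, α 1 + β 1, α 2 + β 2]),
    LinearMap.ker (LinearMap.pi ![α 0 + β 0, α 1 + β 1, α 2 + β 2, α 2]),
    LinearMap.ker (LinearMap.pi ![pairFstCoord 2, pairSndCoord 2, α' 0 - β' 0, α' 1, β' 1]),
    LinearMap.ker (LinearMap.pi ![pairFstCoord 2, pairSndCoord 2, α' 0 - β' 0, α' 1 - β' 1]),
    LinearMap.ker (LinearMap.pi ![pairFstCoord 2, pairSndCoord 2, α' 0 - β' 0]),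
    LinearMap.ker (LinearMap.pi ![pairFstCoord 2, pairSndCoord 2]),
    LinearMap.ker (LinearMap.pi
      ![pairFstCoord 0, pairFstCoord 1, pairSndCoord 0, pairSndCoord 1, α'' - β'']),
    LinearMap.ker (LinearMap.pi
      ![pairFstCoord 0, pairFstCoord 1, pairSndCoord 0, pairSndCoord 1]),
    { finrank_eq := finrank_pairSpace
      F₄_le := ?_
      F₃_le := ?_
      U₁_le := ?_
      U₂_le := ?_
      U₃_le := ?_
      E₁_le := ?_
      ortho := ?_
      finrank_F₁ := le_finrank_ker_pi _ rfl
      finrank_F₂ := le_finrank_ker_pi _ rfl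
      finrank_F₃ := le_finrank_ker_pi _ rfl
      finrank_F₄ := le_finrank_ker_pi _ rfl
      finrank_U₁ := le_finrank_ker_pi _ rfl
      finrank_U₂ := le_finrank_ker_pi _ rfl
      finrank_U₃ := le_finrank_ker_pi _ rfl
      finrank_U₄ := le_finrank_ker_pi _ rfl
      finrank_E₁ := le_finrank_ker_pi _ rfl
      finrank_E₂ := le_finrank_ker_pi _ rfl
      le_top := ?_
      le_F₁ := ?_
      le_F₂ := ?_
      le_F₃ := ?_
      le_F₄ := ?_
      U₁_bound := ?_
      U₂_bound := ?_
      U₃_bound := ?_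
      U₄_bound := ?_
      E₁_bound := ?_
      E₂_bound := ?_ }⟩
  iterate 6
    intro w hw
    rw [mem_ker_pi_iff] at hw ⊢
    simp only [Fin.forall_fin_succ, Matrix.cons_val_zero, Matrix.cons_val_succ,
      LinearMap.add_apply, LinearMap.sub_apply, IsEmpty.forall_iff, and_true] at hw ⊢
    first
      | tauto
      | exact ⟨hw.1, hw.2.1, hw.2.2.1, by rw [hw.2.2.2.1, hw.2.2.2.2, sub_zero]⟩
  · rw [Submodule.isOrtho_iff_inner_eq]
    intro w hw w' hw'
    rw [mem_ker_pi_iff] at hw hw'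
    have hu := hw 0
    have hv := hw 1
    have hu0 := hw' 0
    have hu1 := hw' 1
    have hv0 := hw' 2
    have hv1 := hw' 3
    change pairFst w 2 = 0 at hu
    change pairSnd w 2 = 0 at hv
    change pairFst w' 0 = 0 at hu0
    change pairFst w' 1 = 0 at hu1
    change pairSnd w' 0 = 0 at hv0
    change pairSnd w' 1 = 0 at hv1
    rw [inner_pair, PiLp.inner_apply, PiLp.inner_apply]
    have e : ∀ F : Fin (2 + 1) → ℂ, ∑ i, F i = F 0 + F 1 + F 2 := Fin.sum_univ_three
    rw [e, e, hu, hv, hu0, hu1, hv0, hv1]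
    simp
  · intro w hw1
    obtain ⟨c, n, h1, h2, h3⟩ := h w hw1
    rw [h1]
    obtain ⟨a0, b0, p0, -, r0⟩ := h3 0
    obtain ⟨a1, b1, p1, -, r1⟩ := h3 1
    obtain ⟨a2, b2, p2, -, r2⟩ := h3 2
    nlinarith
  · intro w hw hw1
    rw [mem_ker_pi_iff] at hw
    simp only [Fin.forall_fin_succ, Matrix.cons_val_zero, Matrix.cons_val_succ,
      LinearMap.add_apply, IsEmpty.forall_iff, and_true] at hw
    have e0 := hw
    obtain ⟨c, n, h1, h2, h3⟩ := h w hw1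
    rw [h1]
    obtain ⟨a0, b0, p0, -, r0⟩ := h3 0
    obtain ⟨a1, b1, p1, -, r1⟩ := h3 1
    obtain ⟨a2, b2, p2, -, r2⟩ := h3 2
    have c0 := p0 e0
    nlinarith
  · intro w hw hw1
    rw [mem_ker_pi_iff] at hw
    simp only [Fin.forall_fin_succ, Matrix.cons_val_zero, Matrix.cons_val_succ,
      LinearMap.add_apply, IsEmpty.forall_iff, and_true] at hw
    obtain ⟨e0, e1⟩ := hw
    obtain ⟨c, n, h1, h2, h3⟩ := h w hw1
    rw [h1]
    obtain ⟨a0, b0, p0, -, r0⟩ := h3 0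
    obtain ⟨a1, b1, p1, -, r1⟩ := h3 1
    obtain ⟨a2, b2, p2, -, r2⟩ := h3 2
    have c0 := p0 e0
    have c1 := p1 e1
    nlinarith
  · intro w hw hw1
    rw [mem_ker_pi_iff] at hw
    simp only [Fin.forall_fin_succ, Matrix.cons_val_zero, Matrix.cons_val_succ,
      LinearMap.add_apply, IsEmpty.forall_iff, and_true] at hw
    obtain ⟨e0, e1, e2⟩ := hw
    obtain ⟨c, n, h1, h2, h3⟩ := h w hw1
    rw [h1]
    obtain ⟨a0, b0, p0, -, r0⟩ := h3 0
    obtain ⟨a1, b1, p1, -, r1⟩ := h3 1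
    obtain ⟨a2, b2, p2, -, r2⟩ := h3 2
    have c0 := p0 e0
    have c1 := p1 e1
    have c2 := p2 e2
    nlinarith
  · intro w hw hw1
    rw [mem_ker_pi_iff] at hw
    simp only [Fin.forall_fin_succ, Matrix.cons_val_zero, Matrix.cons_val_succ,
      LinearMap.add_apply, IsEmpty.forall_iff, and_true] at hw
    obtain ⟨e0, e1, e2, e3⟩ := hw
    obtain ⟨c, n, h1, h2, h3⟩ := h w hw1
    rw [h1]
    obtain ⟨a0, b0, p0, -, r0⟩ := h3 0
    obtain ⟨a1, b1, p1, -, r1⟩ := h3 1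
    obtain ⟨a2, b2, p2, -, r2⟩ := h3 2
    have c0 := p0 e0
    have c1 := p1 e1
    have c2 := p2 e2
    have c3 := r2 e3
    nlinarith
  · intro w hw hw1
    rw [mem_ker_pi_iff] at hw
    simp only [Fin.forall_fin_succ, Matrix.cons_val_zero, Matrix.cons_val_succ,
      LinearMap.sub_apply, IsEmpty.forall_iff, and_true] at hw
    obtain ⟨u2, v2, d0, d1, d2⟩ := hw
    obtain ⟨c, n, h1, h2, h3⟩ := h' w u2 v2 hw1
    rw [h1]
    obtain ⟨a0, b0, -, q0, r0⟩ := h3 0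
    obtain ⟨a1, b1, -, q1, r1⟩ := h3 1
    have c0 := q0 d0
    have c1 := q1 (by rw [d1, d2, sub_zero])
    have c1' := r1 d1
    nlinarith
  · intro w hw hw1
    rw [mem_ker_pi_iff] at hw
    simp only [Fin.forall_fin_succ, Matrix.cons_val_zero, Matrix.cons_val_succ,
      LinearMap.sub_apply, IsEmpty.forall_iff, and_true] at hw
    obtain ⟨u2, v2, d0, d1⟩ := hw
    obtain ⟨c, n, h1, h2, h3⟩ := h' w u2 v2 hw1
    rw [h1]
    obtain ⟨a0, b0, -, q0, r0⟩ := h3 0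
    obtain ⟨a1, b1, -, q1, r1⟩ := h3 1
    have c0 := q0 d0
    have c1 := q1 d1
    nlinarith
  · intro w hw hw1
    rw [mem_ker_pi_iff] at hw
    simp only [Fin.forall_fin_succ, Matrix.cons_val_zero, Matrix.cons_val_succ,
      LinearMap.sub_apply, IsEmpty.forall_iff, and_true] at hw
    obtain ⟨u2, v2, d0⟩ := hw
    obtain ⟨c, n, h1, h2, h3⟩ := h' w u2 v2 hw1
    rw [h1]
    obtain ⟨a0, b0, -, q0, r0⟩ := h3 0
    obtain ⟨a1, b1, -, q1, r1⟩ := h3 1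
    have c0 := q0 d0
    nlinarith
  · intro w hw hw1
    rw [mem_ker_pi_iff] at hw
    simp only [Fin.forall_fin_succ, Matrix.cons_val_zero, Matrix.cons_val_succ,
      IsEmpty.forall_iff, and_true] at hw
    obtain ⟨u2, v2⟩ := hw
    obtain ⟨c, n, h1, h2, h3⟩ := h' w u2 v2 hw1
    rw [h1]
    obtain ⟨a0, b0, -, q0, r0⟩ := h3 0
    obtain ⟨a1, b1, -, q1, r1⟩ := h3 1
    nlinarith
  · intro w hw hw1
    rw [mem_ker_pi_iff] at hw
    simp only [Fin.forall_fin_succ, Matrix.cons_val_zero, Matrix.cons_val_succ,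
      LinearMap.sub_apply, IsEmpty.forall_iff, and_true] at hw
    obtain ⟨u0, u1, v0, v1, d⟩ := hw
    obtain ⟨c, h1, h2, h3⟩ := h'' w u0 u1 v0 v1 hw1
    rw [h1]
    rw [h3 d, mul_one]
  · intro w hw hw1
    rw [mem_ker_pi_iff] at hw
    simp only [Fin.forall_fin_succ, Matrix.cons_val_zero, Matrix.cons_val_succ,
      IsEmpty.forall_iff, and_true] at hw
    obtain ⟨u0, u1, v0, v1⟩ := hw
    obtain ⟨c, h1, h2, h3⟩ := h'' w u0 u1 v0 v1 hw1
    rw [h1]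
    nlinarith

/-- The polynomial equations saying that the real matrix `X` has singular values `a, b, c`, its
top-left `2 × 2` block has singular values `s₁, s₂`, and its bottom-right entry is `t`. -/
structure IsRealModel (X : Fin 3 → Fin 3 → ℝ) (a b c s₁ s₂ t : ℝ) : Prop where
  sq_sum : ∑ i, ∑ j, X i j ^ 2 = a ^ 2 + b ^ 2 + c ^ 2
  minor_sum : (X 0 0 * X 1 1 - X 0 1 * X 1 0) ^ 2 + (X 0 0 * X 1 2 - X 0 2 * X 1 0) ^ 2
    + (X 0 1 * X 1 2 - X 0 2 * X 1 1) ^ 2 + (X 0 0 * X 2 1 - X 0 1 * X 2 0) ^ 2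
    + (X 0 0 * X 2 2 - X 0 2 * X 2 0) ^ 2 + (X 0 1 * X 2 2 - X 0 2 * X 2 1) ^ 2
    + (X 1 0 * X 2 1 - X 1 1 * X 2 0) ^ 2 + (X 1 0 * X 2 2 - X 1 2 * X 2 0) ^ 2
    + (X 1 1 * X 2 2 - X 1 2 * X 2 1) ^ 2 = a ^ 2 * b ^ 2 + a ^ 2 * c ^ 2 + b ^ 2 * c ^ 2
  det_eq : X 0 0 * (X 1 1 * X 2 2 - X 1 2 * X 2 1) - X 0 1 * (X 1 0 * X 2 2 - X 1 2 * X 2 0)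
    + X 0 2 * (X 1 0 * X 2 1 - X 1 1 * X 2 0) = a * b * c
  block_sq_sum : X 0 0 ^ 2 + X 0 1 ^ 2 + X 1 0 ^ 2 + X 1 1 ^ 2 = s₁ ^ 2 + s₂ ^ 2
  block_det : X 0 0 * X 1 1 - X 0 1 * X 1 0 = s₁ * s₂
  corner : X 2 2 = t

theorem isRealModel_of_sparse {l₁ l₂ l₃ l₄ s₁ s₂ t h k x y A B : ℝ}
    (hl : l₁ + l₂ + l₃ + l₄ = 0) (hh : h = k + l₄ - s₁ + s₂)
    (hx : x = k - (-t + s₁ - s₂)) (hy : y = (-t + s₁ - s₂) - l₄)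
    (hx0 : 0 ≤ x) (hy0 : 0 ≤ y) (hA0 : 0 ≤ A) (hB0 : 0 ≤ B) (hxy : x + y ≠ 0)
    (hk : k + t + s₁ - s₂ ≠ 0)
    (hA : A * ((x + y) * (k + t + s₁ - s₂)) = (l₁ - k) * (k - l₂) * (k - l₃))
    (hB : B * (k + t + s₁ - s₂) =
      (l₁ - (-t - s₁ + s₂)) * (l₂ - (-t - s₁ + s₂)) * ((-t - s₁ + s₂) - l₃))
    (hK : A * x = (s₁ + s₂) ^ 2 - h ^ 2) :
    ∃ X, IsRealModel X ((l₁ + l₂) / 2) ((l₁ + l₃) / 2) ((l₁ + l₄) / 2) s₁ s₂ t := by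
  obtain ⟨α, rfl⟩ : ∃ α, x = α ^ 2 := ⟨√x, (Real.sq_sqrt hx0).symm⟩
  obtain ⟨β, rfl⟩ : ∃ β, y = β ^ 2 := ⟨√y, (Real.sq_sqrt hy0).symm⟩
  obtain ⟨g, rfl⟩ : ∃ g, A = g ^ 2 := ⟨√A, (Real.sq_sqrt hA0).symm⟩
  obtain ⟨u, rfl⟩ : ∃ u, B = u ^ 2 := ⟨√B, (Real.sq_sqrt hB0).symm⟩
  refine ⟨![![(h + s₁ - s₂) / 2, g * α / 2, g * β / 2],
    ![-(g * α) / 2, (h - s₁ + s₂) / 2, (u + α * β) / 2],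
    ![g * β / 2, (u - α * β) / 2, t]], ?_, ?_, ?_, ?_, ?_, ?_⟩ <;>
    simp only [Fin.sum_univ_three, Matrix.cons_val]
  · trans (h ^ 2 + (s₁ - s₂) ^ 2 + g ^ 2 * (α ^ 2 + β ^ 2) + u ^ 2 + α ^ 2 * β ^ 2) / 2 + t ^ 2
    · ring
    generalize α ^ 2 = x at *
    generalize β ^ 2 = y at *
    generalize g ^ 2 = A at *
    generalize u ^ 2 = B at *
    clear hK
    obtain rfl : l₃ = -l₁ - l₂ - l₄ := by linarith
    rw [← eq_div_iff (by simp [hxy, hk])] at hA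
    rw [← eq_div_iff hk] at hB
    subst hA hB hh hx hy
    field_simp
    ring
  · trans ((h + s₁ - s₂) / 2 * ((h - s₁ + s₂) / 2) + g ^ 2 * α ^ 2 / 4) ^ 2
      + ((h + s₁ - s₂) / 2) ^ 2 * u ^ 2 / 2
      + α ^ 2 * β ^ 2 * (h + s₁ - s₂ + g ^ 2) ^ 2 / 8
      + g ^ 2 / 8 * (α ^ 2 * u ^ 2 + β ^ 2 * (α ^ 2 - (h - s₁ + s₂)) ^ 2)
      + ((h + s₁ - s₂) / 2 * t - g ^ 2 * β ^ 2 / 4) ^ 2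
      + g ^ 2 * α ^ 2 * (2 * t + β ^ 2) ^ 2 / 8 + g ^ 2 * β ^ 2 * u ^ 2 / 8
      + ((h - s₁ + s₂) / 2 * t - (u ^ 2 - α ^ 2 * β ^ 2) / 4) ^ 2
    · ring
    generalize α ^ 2 = x at *
    generalize β ^ 2 = y at *
    generalize g ^ 2 = A at *
    generalize u ^ 2 = B at *
    clear hK
    obtain rfl : l₃ = -l₁ - l₂ - l₄ := by linarith
    rw [← eq_div_iff (by simp [hxy, hk])] at hA
    rw [← eq_div_iff hk] at hB
    subst hA hB hh hx hy
    field_simp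
    ring
  · trans (h + s₁ - s₂) / 2 * ((h - s₁ + s₂) / 2 * t - (u ^ 2 - α ^ 2 * β ^ 2) / 4)
      + g ^ 2 * α ^ 2 * t / 4 + g ^ 2 * α ^ 2 * β ^ 2 / 4 - (h - s₁ + s₂) / 2 * g ^ 2 * β ^ 2 / 4
    · ring
    generalize α ^ 2 = x at *
    generalize β ^ 2 = y at *
    generalize g ^ 2 = A at *
    generalize u ^ 2 = B at *
    clear hK
    obtain rfl : l₃ = -l₁ - l₂ - l₄ := by linarith
    rw [← eq_div_iff (by simp [hxy, hk])] at hA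
    rw [← eq_div_iff hk] at hB
    subst hA hB hh hx hy
    field_simp
    ring
  · linear_combination hK / 2
  · linear_combination hK / 4

theorem isRealModel_of_dense {l₁ l₂ l₃ l₄ s₁ s₂ t h k x y A V W : ℝ}
    (hl : l₁ + l₂ + l₃ + l₄ = 0) (hh : h = k + l₃ + l₄ + t)
    (hx : x = k - (-t + s₁ - s₂)) (hy : y = k - (-t - s₁ + s₂))
    (hx0 : 0 ≤ x) (hy0 : 0 ≤ y) (hA0 : 0 ≤ A) (hV0 : 0 ≤ V) (hW0 : 0 ≤ W)
    (hs : s₁ - s₂ ≠ 0)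
    (hA : A * ((k - l₃) * (k - l₄)) = (l₁ - k) * (k - l₂))
    (hV : V * (2 * (s₁ - s₂)) = (-t + s₁ - s₂ - l₃) * (-t + s₁ - s₂ - l₄))
    (hW : W * (2 * (s₁ - s₂)) = (l₃ - (-t - s₁ + s₂)) * (-t - s₁ + s₂ - l₄))
    (hK : A * (x * y) = (s₁ + s₂) ^ 2 - h ^ 2) :
    ∃ X, IsRealModel X ((l₁ + l₂) / 2) ((l₁ + l₃) / 2) ((l₁ + l₄) / 2) s₁ s₂ t := by
  have h2 : 2 * (s₁ - s₂) ≠ 0 := by simp [hs]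
  have hst : s₁ = s₂ + (y - x) / 2 := by linarith
  have ht : t = (x + y) / 2 - k := by linarith
  have hsum : l₃ + l₄ = 2 * k - (V + W + x + y) := by
    apply mul_right_cancel₀ h2
    rw [hx, hy]
    linear_combination hV + hW
  have hprod : (k - l₃) * (k - l₄) = y * V + x * W + x * y := by
    apply mul_right_cancel₀ h2
    rw [hx, hy]
    linear_combination -(k - (-t - s₁ + s₂)) * hV - (k - (-t + s₁ - s₂)) * hW
  have hσ : l₁ + l₂ = V + W + x + y - 2 * k := by linarith
  have hρ : l₃ * l₄ = k ^ 2 - k * (V + W + x + y) + (y * V + x * W + x * y) := by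
    linear_combination hprod + k * hsum
  have hπ : l₁ * l₂ = k * (V + W + x + y) - 3 * k ^ 2 - A * (y * V + x * W + x * y) := by
    rw [hprod] at hA
    linear_combination k * hσ + hA
  have hh' : h = 2 * k - (V + W + x + y) + (x + y) / 2 := by linarith
  have hsq : ((l₁ + l₂) / 2) ^ 2 + ((l₁ + l₃) / 2) ^ 2 + ((l₁ + l₄) / 2) ^ 2
      = (l₁ + l₂) ^ 2 / 2 - (l₁ * l₂ + l₃ * l₄) / 2 := by
    obtain rfl : l₂ = -l₁ - l₃ - l₄ := by linarith
    ring
  have hmin : ((l₁ + l₂) / 2) ^ 2 * ((l₁ + l₃) / 2) ^ 2 + ((l₁ + l₂) / 2) ^ 2 * ((l₁ + l₄) / 2) ^ 2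
      + ((l₁ + l₃) / 2) ^ 2 * ((l₁ + l₄) / 2) ^ 2
      = (l₁ + l₂) ^ 2 / 4 * ((l₁ + l₂) ^ 2 / 4 - (l₁ * l₂ + l₃ * l₄) / 2)
        + (l₃ * l₄ - l₁ * l₂) ^ 2 / 16 := by
    obtain rfl : l₂ = -l₁ - l₃ - l₄ := by linarith
    ring
  have hdet : (l₁ + l₂) / 2 * ((l₁ + l₃) / 2) * ((l₁ + l₄) / 2)
      = (l₁ + l₂) * (l₃ * l₄ - l₁ * l₂) / 8 := by
    obtain rfl : l₂ = -l₁ - l₃ - l₄ := by linarith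
    ring
  obtain ⟨α, rfl⟩ : ∃ α, x = α ^ 2 := ⟨√x, (Real.sq_sqrt hx0).symm⟩
  obtain ⟨β, rfl⟩ : ∃ β, y = β ^ 2 := ⟨√y, (Real.sq_sqrt hy0).symm⟩
  obtain ⟨g, rfl⟩ : ∃ g, A = g ^ 2 := ⟨√A, (Real.sq_sqrt hA0).symm⟩
  obtain ⟨v, rfl⟩ : ∃ v, V = v ^ 2 := ⟨√V, (Real.sq_sqrt hV0).symm⟩
  obtain ⟨w, rfl⟩ : ∃ w, W = w ^ 2 := ⟨√W, (Real.sq_sqrt hW0).symm⟩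
  refine ⟨![![(h + s₁ - s₂) / 2, g * α * β / 2, β * (g * v - w) / 2],
    ![-(g * α * β) / 2, (h - s₁ + s₂) / 2, α * (g * w + v) / 2],
    ![β * (g * v + w) / 2, α * (g * w - v) / 2, t]], ?_, ?_, ?_, ?_, ?_, ?_⟩ <;>
    simp only [Fin.sum_univ_three, Matrix.cons_val]
  · trans (h ^ 2 + (s₁ - s₂) ^ 2 + g ^ 2 * α ^ 2 * β ^ 2 + β ^ 2 * (g ^ 2 * v ^ 2 + w ^ 2)
      + α ^ 2 * (g ^ 2 * w ^ 2 + v ^ 2)) / 2 + t ^ 2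
    · ring
    generalize α ^ 2 = x at *
    generalize β ^ 2 = y at *
    generalize g ^ 2 = A at *
    generalize v ^ 2 = V at *
    generalize w ^ 2 = W at *
    rw [hsq, hσ, hπ, hρ, hh', hst, ht]
    ring
  · trans ((h + s₁ - s₂) / 2 * ((h - s₁ + s₂) / 2) + g ^ 2 * α ^ 2 * β ^ 2 / 4) ^ 2
      + 2 * α ^ 2 * (v ^ 2 * ((h + s₁ - s₂) / 4 + g ^ 2 * β ^ 2 / 4) ^ 2
        + g ^ 2 * w ^ 2 * ((h + s₁ - s₂) / 4 - β ^ 2 / 4) ^ 2)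
      + 2 * β ^ 2 * (w ^ 2 * (g ^ 2 * α ^ 2 / 4 + (h - s₁ + s₂) / 4) ^ 2
        + g ^ 2 * v ^ 2 * (α ^ 2 / 4 - (h - s₁ + s₂) / 4) ^ 2)
      + ((h + s₁ - s₂) / 2 * t - β ^ 2 * (g ^ 2 * v ^ 2 - w ^ 2) / 4) ^ 2
      + ((h - s₁ + s₂) / 2 * t - α ^ 2 * (g ^ 2 * w ^ 2 - v ^ 2) / 4) ^ 2
      + 2 * α ^ 2 * β ^ 2 * (g ^ 2 * (t / 2 + (v ^ 2 + w ^ 2) / 4) ^ 2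
        + v ^ 2 * w ^ 2 * (g ^ 2 + 1) ^ 2 / 16)
    · ring
    generalize α ^ 2 = x at *
    generalize β ^ 2 = y at *
    generalize g ^ 2 = A at *
    generalize v ^ 2 = V at *
    generalize w ^ 2 = W at *
    rw [hmin, hσ, hπ, hρ, hh', hst, ht]
    ring
  · trans (h + s₁ - s₂) / 2 * ((h - s₁ + s₂) / 2 * t - α ^ 2 * (g ^ 2 * w ^ 2 - v ^ 2) / 4)
      + α ^ 2 * β ^ 2 * g ^ 2 * (t / 2 + (v ^ 2 + w ^ 2) / 4) / 2
      + β ^ 2 / 2 * (g ^ 2 * v ^ 2 * (α ^ 2 / 4 - (h - s₁ + s₂) / 4)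
        + w ^ 2 * (g ^ 2 * α ^ 2 / 4 + (h - s₁ + s₂) / 4))
    · ring
    generalize α ^ 2 = x at *
    generalize β ^ 2 = y at *
    generalize g ^ 2 = A at *
    generalize v ^ 2 = V at *
    generalize w ^ 2 = W at *
    rw [hdet, hσ, hπ, hρ, hh', hst, ht]
    ring
  · linear_combination hK / 2
  · linear_combination hK / 4

theorem exists_isRealModel_of_lt {a b c s₁ s₂ t : ℝ} (hab : b < a) (hbc : c ≤ b) (hc : 0 ≤ c)
    (hs : s₂ < s₁) (hs₂ : 0 ≤ s₂) (ht : 0 ≤ t) (h₁ : s₁ ≤ a) (h₂ : s₂ ≤ b) (h₃ : c ≤ s₁)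
    (hppp : s₁ + s₂ + t ≤ a + b + c) (hpmp : s₁ - s₂ + t ≤ a + b - c)
    (hppm : s₁ + s₂ - t ≤ a + b - c) (hmpp : -s₁ + s₂ + t ≤ a - b + c)
    (hmpm : -s₁ + s₂ - t ≤ a - b - c) (hmmp : -s₁ - s₂ + t ≤ a - b - c) :
    ∃ X, IsRealModel X a b c s₁ s₂ t := by
  obtain ⟨l₁, hl₁⟩ : ∃ l, l = a + b + c := ⟨_, rfl⟩
  obtain ⟨l₂, hl₂⟩ : ∃ l, l = a - b - c := ⟨_, rfl⟩
  obtain ⟨l₃, hl₃⟩ : ∃ l, l = -a + b - c := ⟨_, rfl⟩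
  obtain ⟨l₄, hl₄⟩ : ∃ l, l = -a - b + c := ⟨_, rfl⟩
  obtain ⟨m₁, hm₁⟩ : ∃ m, m = -t + s₁ - s₂ := ⟨_, rfl⟩
  obtain ⟨m₂, hm₂⟩ : ∃ m, m = -t - s₁ + s₂ := ⟨_, rfl⟩
  have hle : max l₂ m₁ ≤ l₁ := max_le (by linarith) (by linarith)
  have hl : l₁ + l₂ + l₃ + l₄ = 0 := by linarith
  have ha : a = (l₁ + l₂) / 2 := by linarith
  have hb : b = (l₁ + l₃) / 2 := by linarith
  have hc' : c = (l₁ + l₄) / 2 := by linarith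
  have hsq : ∀ {h : ℝ}, -(s₁ + s₂) ≤ h → h ≤ s₁ + s₂ → 0 ≤ (s₁ + s₂) ^ 2 - h ^ 2 := by
    intro h h1 h2
    nlinarith
  have hsq' : ∀ {h : ℝ}, h ≤ -(s₁ + s₂) → (s₁ + s₂) ^ 2 - h ^ 2 ≤ 0 := by
    intro h h1
    nlinarith
  rcases le_total l₃ m₂ with h | h
  · obtain ⟨k, ⟨hk₀, hk₁⟩, hk⟩ : (0 : ℝ) ∈ (fun k ↦ (l₁ - k) * (k - l₂) * (k - l₃) * (k - m₁)
        - (k - m₂) * (k - l₄) * ((s₁ + s₂) ^ 2 - (k + l₄ - s₁ + s₂) ^ 2)) ''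
        Set.Icc (max l₂ m₁) l₁ := by
      refine intermediate_value_Icc' hle (by fun_prop) ⟨?_, ?_⟩
      · have h0 := hsq (h := l₁ + l₄ - s₁ + s₂) (by linarith) (by linarith)
        have h1 : 0 ≤ l₁ - m₂ := by linarith
        have h2 : 0 ≤ l₁ - l₄ := by linarith
        have := mul_nonneg (mul_nonneg h1 h2) h0
        simp only [sub_self, zero_mul]
        linarith
      · rcases max_cases l₂ m₁ with ⟨hm, hm'⟩ | ⟨hm, hm'⟩ <;>
          simp only [hm, sub_self, mul_zero, zero_mul, zero_sub, Left.nonneg_neg_iff]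
        · exact mul_nonpos_of_nonneg_of_nonpos
            (mul_nonneg (by linarith) (by linarith)) (hsq' (by linarith))
        · exact mul_nonpos_of_nonneg_of_nonpos
            (mul_nonneg (by linarith) (by linarith)) (hsq' (by linarith))
    rw [max_le_iff] at hk₀
    have hd₁ : 0 < k - l₄ := by linarith
    have hd₂ : 0 < k + t + s₁ - s₂ := by linarith
    rw [ha, hb, hc']
    refine isRealModel_of_sparse hl rfl rfl rfl
      (A := (l₁ - k) * (k - l₂) * (k - l₃) / ((k - l₄) * (k + t + s₁ - s₂)))
      (B := (l₁ - m₂) * (l₂ - m₂) * (m₂ - l₃) / (k + t + s₁ - s₂))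
      (by linarith) (by linarith) ?_ ?_ (by linarith) hd₂.ne' ?_ ?_ ?_
    · have := sub_nonneg.2 hk₁
      have := sub_nonneg.2 hk₀.1
      have : 0 ≤ k - l₃ := by linarith
      positivity
    · have : 0 ≤ l₁ - m₂ := by linarith
      have : 0 ≤ l₂ - m₂ := by linarith
      have : 0 ≤ m₂ - l₃ := by linarith
      positivity
    · rw [show k - (-t + s₁ - s₂) + (-t + s₁ - s₂ - l₄) = k - l₄ by ring]
      field_simp
    · rw [← hm₂]
      field_simp
    · rw [div_mul_eq_mul_div, div_eq_iff (by positivity), ← hm₁]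
      rw [hm₂] at hk
      linear_combination hk
  · obtain ⟨k, ⟨hk₀, hk₁⟩, hk⟩ : (0 : ℝ) ∈ (fun k ↦ (l₁ - k) * (k - l₂) * (k - m₁) * (k - m₂)
        - (k - l₃) * (k - l₄) * ((s₁ + s₂) ^ 2 - (k + l₃ + l₄ + t) ^ 2)) ''
        Set.Icc (max l₂ m₁) l₁ := by
      refine intermediate_value_Icc' hle (by fun_prop) ⟨?_, ?_⟩
      · have h0 := hsq (h := l₁ + l₃ + l₄ + t) (by linarith) (by linarith)
        have h1 : 0 ≤ l₁ - l₃ := by linarith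
        have h2 : 0 ≤ l₁ - l₄ := by linarith
        have := mul_nonneg (mul_nonneg h1 h2) h0
        simp only [sub_self, zero_mul]
        linarith
      · rcases max_cases l₂ m₁ with ⟨hm, hm'⟩ | ⟨hm, hm'⟩ <;>
          simp only [hm, sub_self, mul_zero, zero_mul, zero_sub, Left.nonneg_neg_iff]
        · exact mul_nonpos_of_nonneg_of_nonpos
            (mul_nonneg (by linarith) (by linarith)) (hsq' (by linarith))
        · exact mul_nonpos_of_nonneg_of_nonpos
            (mul_nonneg (by linarith) (by linarith)) (hsq' (by linarith))
    rw [max_le_iff] at hk₀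
    have hd₁ : 0 < k - l₃ := by linarith
    have hd₂ : 0 < k - l₄ := by linarith
    have hd₃ : 0 < s₁ - s₂ := by linarith
    rw [ha, hb, hc']
    refine isRealModel_of_dense hl rfl rfl rfl
      (A := (l₁ - k) * (k - l₂) / ((k - l₃) * (k - l₄)))
      (V := (m₁ - l₃) * (m₁ - l₄) / (2 * (s₁ - s₂)))
      (W := (l₃ - m₂) * (m₂ - l₄) / (2 * (s₁ - s₂)))
      (by linarith) (by linarith) ?_ ?_ ?_ hd₃.ne' ?_ ?_ ?_ ?_
    · have := sub_nonneg.2 hk₁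
      have := sub_nonneg.2 hk₀.1
      positivity
    · have : 0 ≤ m₁ - l₃ := by linarith
      have : 0 ≤ m₁ - l₄ := by linarith
      positivity
    · have : 0 ≤ l₃ - m₂ := by linarith
      have : 0 ≤ m₂ - l₄ := by linarith
      positivity
    · field_simp
    · rw [hm₁]
      field_simp
    · rw [hm₂]
      field_simp
    · rw [div_mul_eq_mul_div, div_eq_iff (by positivity), ← hm₁, ← hm₂]
      linear_combination hk

theorem exists_isRealModel {a b c s₁ s₂ t : ℝ} (hab : b ≤ a) (hbc : c ≤ b) (hc : 0 ≤ c)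
    (hs : s₂ ≤ s₁) (hs₂ : 0 ≤ s₂) (ht : 0 ≤ t) (h₁ : s₁ ≤ a) (h₂ : s₂ ≤ b) (h₃ : c ≤ s₁)
    (hppp : s₁ + s₂ + t ≤ a + b + c) (hpmp : s₁ - s₂ + t ≤ a + b - c)
    (hppm : s₁ + s₂ - t ≤ a + b - c) (hmpp : -s₁ + s₂ + t ≤ a - b + c)
    (hmpm : -s₁ + s₂ - t ≤ a - b - c) (hmmp : -s₁ - s₂ + t ≤ a - b - c) :
    ∃ X, IsRealModel X a b c s₁ s₂ t := by
  obtain ⟨R, hR⟩ : ∃ R, R = √((a + 1) ^ 2 + b ^ 2 + c ^ 2) := ⟨_, rfl⟩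
  let S : Set (ℝ × (Fin 3 → Fin 3 → ℝ)) :=
    {p | IsRealModel p.2 (a + p.1) b c (s₁ + p.1) s₂ t} ∩
      (Set.Icc 0 1 ×ˢ Set.Icc (fun _ _ ↦ -R) (fun _ _ ↦ R))
  have hS : IsCompact S := by
    refine (isCompact_Icc.prod isCompact_Icc).inter_left ?_
    have : {p : ℝ × (Fin 3 → Fin 3 → ℝ) | IsRealModel p.2 (a + p.1) b c (s₁ + p.1) s₂ t} =
        {p | _} ∩ ({p | _} ∩ ({p | _} ∩ ({p | _} ∩ ({p | _} ∩ {p | _})))) :=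
      Set.ext fun p ↦ ⟨fun h ↦ ⟨h.1, h.2, h.3, h.4, h.5, h.6⟩,
        fun h ↦ ⟨h.1, h.2.1, h.2.2.1, h.2.2.2.1, h.2.2.2.2.1, h.2.2.2.2.2⟩⟩
    rw [this]
    refine .inter ?_ (.inter ?_ (.inter ?_ (.inter ?_ (.inter ?_ ?_)))) <;>
      exact isClosed_eq (by fun_prop) (by fun_prop)
  have hsub : Set.Ioc 0 1 ⊆ Prod.fst '' S := by
    rintro ε ⟨hε, hε1⟩
    obtain ⟨X, hX⟩ := exists_isRealModel_of_lt (a := a + ε) (b := b) (c := c) (s₁ := s₁ + ε)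
      (s₂ := s₂) (t := t) (by linarith) hbc hc (by linarith) hs₂ ht (by linarith) h₂
      (by linarith) (by linarith) (by linarith) (by linarith) (by linarith) (by linarith)
      (by linarith)
    have hXR : ∀ i j, |X i j| ≤ R := fun i j ↦ by
      rw [hR]
      refine Real.abs_le_sqrt ?_
      calc X i j ^ 2 ≤ ∑ j, X i j ^ 2 :=
            Finset.single_le_sum (f := fun j ↦ X i j ^ 2) (fun _ _ ↦ sq_nonneg _) (Finset.mem_univ j)
        _ ≤ ∑ i, ∑ j, X i j ^ 2 := Finset.single_le_sum (f := fun i ↦ ∑ j, X i j ^ 2)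
            (fun _ _ ↦ Finset.sum_nonneg fun _ _ ↦ sq_nonneg _) (Finset.mem_univ i)
        _ = (a + ε) ^ 2 + b ^ 2 + c ^ 2 := hX.sq_sum
        _ ≤ _ := by gcongr; linarith
    exact ⟨(ε, X), ⟨hX, ⟨hε.le, hε1⟩, fun i j ↦ (abs_le.1 (hXR i j)).1,
      fun i j ↦ (abs_le.1 (hXR i j)).2⟩, rfl⟩
  have h0 : (0 : ℝ) ∈ Prod.fst '' S :=
    (hS.image continuous_fst).isClosed.closure_subset_iff.2 hsub
      (by rw [closure_Ioc zero_ne_one]; exact ⟨le_rfl, zero_le_one⟩)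
  obtain ⟨⟨ε, X⟩, ⟨hX, -⟩, rfl : ε = 0⟩ := h0
  exact ⟨X, by simpa using hX⟩

theorem IsRealModel.mem_coneT {X : Fin 3 → Fin 3 → ℝ} {g : Fin (2 + 1) → ℝ} {s : Fin 2 → ℝ} {t : ℝ}
    (h : IsRealModel X (g 0) (g 1) (g 2) (s 0) (s 1) t)
    (hg1 : g 1 ≤ g 0) (hg2 : g 2 ≤ g 1) (hg3 : 0 ≤ g 2) (hs1 : s 1 ≤ s 0) (hs2 : 0 ≤ s 1)
    (ht : 0 ≤ t) : (g, s, fun _ : Fin 1 => t) ∈ coneT 2 1 := by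
  have hg : Antitone g := Fin.antitone_iff_succ_le.2 fun i ↦ by
    fin_cases i
    exacts [hg1, hg2]
  have hs : Antitone s := Fin.antitone_iff_succ_le.2 fun i ↦ by
    fin_cases i
    exact hs1
  have hg0 : ∀ i, 0 ≤ g i := fun i ↦ hg3.trans (hg (Fin.le_last i))
  have hs0 : ∀ i, 0 ≤ s i := fun i ↦ hs2.trans (hs (Fin.le_last i))
  refine ⟨Matrix.of fun i j ↦ (X i j : ℂ), ?_, ?_, ?_⟩
  · refine sval_eq_of_fin_three _ g hg hg0 ?_ ?_ ?_
    · rw [← h.sq_sum]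
      simp [Matrix.trace_fin_three, Matrix.mul_apply, Fin.sum_univ_three, pow_two]
    · rw [← h.minor_sum]
      simp [minorSum, Matrix.mul_apply, Fin.sum_univ_three]
      ring
    · rw [← mul_pow, ← mul_pow, ← h.det_eq, Matrix.det_mul, Matrix.det_conjTranspose,
        Matrix.det_fin_three]
      simp
      ring
  · refine sval_eq_of_fin_two _ s hs hs0 ?_ ?_
    · rw [← h.block_sq_sum]
      simp [blockTL, Matrix.trace_fin_two, Matrix.mul_apply, Fin.sum_univ_two, pow_two]
      ring
    · rw [← mul_pow, ← h.block_det, Matrix.det_mul, Matrix.det_conjTranspose,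
        Matrix.det_fin_two]
      simp [blockTL]
      ring
  · refine sval_eq_of_fin_one _ _ (fun _ ↦ ht) ?_
    simp [blockBR, Matrix.trace_fin_one, Matrix.mul_apply, h.corner, pow_two]

end

theorem stmt_15 (g : Fin (2 + 1) → ℝ) (s : Fin 2 → ℝ) (t : ℝ)
    (hg1 : g 0 ≥ g 1) (hg2 : g 1 ≥ g 2) (hg3 : g 2 ≥ 0)
    (hs1 : s 0 ≥ s 1) (hs2 : s 1 ≥ 0) (ht : t ≥ 0) :
    (g, s, fun _ : Fin 1 => t) ∈ coneT 2 1 ↔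
      (g 0 ≥ s 0 ∧ g 0 ≥ t ∧ g 1 ≥ s 1 ∧ g 2 ≤ s 0 ∧
       g 0 + g 1 ≥ s 0 + t ∧
       g 0 + g 2 ≥ s 1 + t ∧
       g 0 - g 2 ≥ |s 1 - t| ∧
       g 0 - g 1 ≥ -s 0 + t ∧
       g 0 + g 1 + g 2 ≥ s 0 + s 1 + t ∧
       g 0 + g 1 - g 2 ≥ s 0 - s 1 + t ∧
       g 0 + g 1 - g 2 ≥ s 0 + s 1 - t ∧
       g 0 - g 1 + g 2 ≥ -s 0 + s 1 + t ∧
       g 0 - g 1 - g 2 ≥ -s 0 + s 1 - t ∧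
       g 0 - g 1 - g 2 ≥ -s 0 - s 1 + t) := by
  constructor
  · rintro ⟨X, hg, hs, ht'⟩
    obtain ⟨_, _, _, _, _, _, _, _, _, _, H⟩ := exists_blockFlags X
    have e0 : g 0 = sval X 0 := hg 0
    have e1 : g 1 = sval X 1 := hg 1
    have e2 : g 2 = sval X 2 := hg 2
    have f0 : s 0 = sval (blockTL 2 1 X) 0 := hs 0
    have f1 : s 1 = sval (blockTL 2 1 X) 1 := hs 1
    have k0 : t = sval (blockBR 2 1 X) 0 := ht' 0
    rw [← e0, ← e1, ← e2, ← f0, ← f1, ← k0] at H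
    have h₁ := H.s₁_le
    have h₂ := H.s₂_le
    have h₃ := H.γ₃_le
    have hppp := H.ineq_ppp
    have hppm := H.ineq_ppm
    have hpmp := H.ineq_pmp
    have hmpp := H.ineq_mpp
    have hmmp := H.ineq_mmp
    have hmpm := H.ineq_mpm
    refine ⟨by linarith, by linarith, by linarith, by linarith, by linarith, by linarith,
      abs_le.2 ⟨by linarith, by linarith⟩, by linarith, by linarith, by linarith, by linarith,
      by linarith, by linarith, by linarith⟩
  · rintro ⟨h₁, -, h₂, h₃, -, -, -, -, hppp, hpmp, hppm, hmpp, hmpm, hmmp⟩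
    obtain ⟨X, hX⟩ := exists_isRealModel hg1 hg2 hg3 hs1 hs2 ht h₁ h₂ h₃ hppp hpmp hppm hmpp
      hmpm hmmp
    exact hX.mem_coneT hg1 hg2 hg3 hs1 hs2 ht
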